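/- Every covering 3-hypergraph with at least two edges is eulerian. -/

import Mathlib

/-- A closed walk of length `k` in a hypergraph on vertex type `V` whose edges are
finite sets of vertices: an alternating sequence of vertices and edges such that
consecutive vertices are distinct and both lie in the interposed edge, and the
first vertex equals the last. -/
def IsClosedWalk {V : Type} (k : ℕ) (v : Fin (k + 1) → V) (e : Fin k → Finset V) : Prop :=
  v 0 = v (Fin.last k) ∧
    ∀ i : Fin k, v i.castSucc ≠ v i.succ ∧ v i.castSucc ∈ e i ∧ v i.succ ∈ e i

/-- The multiset of edges traversed by a walk (with multiplicity). -/
def walkEdges {V : Type} {k : ℕ} (e : Fin k → Finset V) : Multiset (Finset V) :=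
  Multiset.ofList (List.ofFn e)

/-- A hypergraph, given by its edge multiset `E` over vertex type `V`, is eulerian if it
admits a closed walk whose multiset of traversed edges is exactly `E`, i.e. a closed
strict trail traversing every edge exactly once (a trivial walk works iff `E = 0`,
matching the convention that a trivial walk is an Euler tour of an edgeless
hypergraph). -/
def IsEulerian {V : Type} (E : Multiset (Finset V)) : Prop :=
  ∃ (k : ℕ) (v : Fin (k + 1) → V) (e : Fin k → Finset V),
    IsClosedWalk k v e ∧ walkEdges e = E

/-- An `l`-covering `k`-hypergraph on vertex type `V`: a nonempty `k`-uniform edge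
multiset such that every `l`-element subset of the vertex set is contained in at
least one edge. -/
def IsCoveringHypergraph {V : Type} [DecidableEq V] (E : Multiset (Finset V))
    (l k : ℕ) : Prop :=
  E ≠ 0 ∧ (∀ f ∈ E, f.card = k) ∧
    ∀ s : Finset V, s.card = l → ∃ f ∈ E, s ⊆ f

set_option linter.unusedSectionVars false
set_option linter.unusedVariables false
namespace Cov3

section basics
variable {V ι : Type} [Fintype V] [DecidableEq V] [Fintype ι] [DecidableEq ι]

/-- crossing number mod 2 of the kept pair of `i` -/
def cr (T : ι → Finset V) (om : ι → V) (χ : V → ZMod 2) (i : ι) : ZMod 2 :=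
  ∑ v ∈ T i, χ v + χ (om i)

def Con (T : ι → Finset V) (om : ι → V) (x y : V) : Prop :=
  ∀ χ : V → ZMod 2, (∀ i, cr T om χ i = 0) → χ x = χ y

def Ev (T : ι → Finset V) (om : ι → V) : Prop :=
  ∀ χ : V → ZMod 2, ∑ i, cr T om χ i = 0

def Tog (T : ι → Finset V) (om : ι → V) (i : ι) (x y : V) : Prop :=
  x ≠ y ∧ x ∈ T i ∧ y ∈ T i ∧ (om i = x ∨ om i = y)

def Flip (om om' : ι → V) (i : ι) (x y : V) : Prop :=
  (om i = x ∧ om' i = y) ∨ (om i = y ∧ om' i = x)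

lemma z2 (a : ZMod 2) : a = 0 ∨ a = 1 := by revert a; decide
lemma z2ne {a : ZMod 2} (h : a ≠ 0) : a = 1 := (z2 a).resolve_left h
lemma z2add (a : ZMod 2) : a + a = 0 := by revert a; decide
lemma z2eq {a b : ZMod 2} (h : a + b = 0) : a = b := by revert a b; decide

variable {T : ι → Finset V} {om om' : ι → V}

/-- the triple in terms of two distinct kept vertices -/
lemma trip (hT : ∀ i, (T i).card = 3) (hv : ∀ i, om i ∈ T i) {i : ι} {p q : V}
    (hp : p ∈ T i) (hq : q ∈ T i) (hpq : p ≠ q) (hpo : p ≠ om i) (hqo : q ≠ om i) :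
    T i = {p, q, om i} := by
  symm
  apply Finset.eq_of_subset_of_card_le
  · intro x hx
    simp only [Finset.mem_insert, Finset.mem_singleton] at hx
    rcases hx with rfl | rfl | rfl
    · exact hp
    · exact hq
    · exact hv i
  · rw [hT i, Finset.card_eq_three.mpr ⟨p, q, om i, hpq, hpo, hqo, rfl⟩]

lemma trip' (hT : ∀ i, (T i).card = 3) {i : ι} {p q r : V}
    (hp : p ∈ T i) (hq : q ∈ T i) (hr : r ∈ T i) (hpq : p ≠ q) (hpo : p ≠ r) (hqo : q ≠ r) :
    ∀ x ∈ T i, x = p ∨ x = q ∨ x = r := by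
  have : T i = {p, q, r} := by
    symm
    apply Finset.eq_of_subset_of_card_le
    · intro x hx
      simp only [Finset.mem_insert, Finset.mem_singleton] at hx
      rcases hx with rfl | rfl | rfl <;> assumption
    · rw [hT i, Finset.card_eq_three.mpr ⟨p, q, r, hpq, hpo, hqo, rfl⟩]
  intro x hx
  simpa [this] using hx

lemma cr_eq (hT : ∀ i, (T i).card = 3) (hv : ∀ i, om i ∈ T i) (χ : V → ZMod 2) {i : ι} {p q : V}
    (hp : p ∈ T i) (hq : q ∈ T i) (hpq : p ≠ q) (hpo : p ≠ om i) (hqo : q ≠ om i) :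
    cr T om χ i = χ p + χ q := by
  unfold cr
  rw [trip hT hv hp hq hpq hpo hqo, Finset.sum_insert (by simp [hpq, hpo]),
    Finset.sum_insert (by simp [hqo]), Finset.sum_singleton]
  have := z2add (χ (om i))
  linear_combination this

lemma exkept (hT : ∀ i, (T i).card = 3) (hv : ∀ i, om i ∈ T i) (i : ι) :
    ∃ p q, p ∈ T i ∧ q ∈ T i ∧ p ≠ q ∧ p ≠ om i ∧ q ≠ om i := by
  have h : ((T i).erase (om i)).card = 2 := by rw [Finset.card_erase_of_mem (hv i), hT i]
  obtain ⟨p, q, hpq, he⟩ := Finset.card_eq_two.mp h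
  have hp : p ∈ (T i).erase (om i) := by rw [he]; simp
  have hq : q ∈ (T i).erase (om i) := by rw [he]; simp
  rw [Finset.mem_erase] at hp hq
  exact ⟨p, q, hp.2, hq.2, hpq, hp.1, hq.1⟩

/-- given one kept vertex, find the other one -/
lemma exkept1 (hT : ∀ i, (T i).card = 3) (hv : ∀ i, om i ∈ T i) {i : ι} {p : V}
    (hp : p ∈ T i) (hpo : p ≠ om i) :
    ∃ q, q ∈ T i ∧ p ≠ q ∧ q ≠ om i := by
  obtain ⟨a, b, ha, hb, hab, hao, hbo⟩ := exkept hT hv i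
  by_cases h : p = a
  · subst h; exact ⟨b, hb, hab, hbo⟩
  · exact ⟨a, ha, h, hao⟩

/-- third vertex -/
lemma exthird (hT : ∀ i, (T i).card = 3) {i : ι} (p q : V) :
    ∃ r ∈ T i, r ≠ p ∧ r ≠ q := by
  by_contra h
  push Not at h
  have hs : T i ⊆ {p, q} := by
    intro x hx
    simp only [Finset.mem_insert, Finset.mem_singleton]
    by_cases hxp : x = p
    · exact Or.inl hxp
    · exact Or.inr (h x hx hxp)
  have := (Finset.card_le_card hs).trans Finset.card_le_two
  rw [hT i] at this; omega

lemma good_eq (hT : ∀ i, (T i).card = 3) (hv : ∀ i, om i ∈ T i) {χ : V → ZMod 2} {i : ι}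
    (hg : cr T om χ i = 0) {p q : V} (hp : p ∈ T i) (hq : q ∈ T i) (hpo : p ≠ om i)
    (hqo : q ≠ om i) : χ p = χ q := by
  by_cases hpq : p = q
  · rw [hpq]
  · rw [cr_eq hT hv χ hp hq hpq hpo hqo] at hg
    exact z2eq hg

lemma Con.refl (x : V) : Con T om x x := fun _ _ => rfl
lemma Con.symm {x y : V} (h : Con T om x y) : Con T om y x := fun χ hχ => (h χ hχ).symm
lemma Con.trans {x y z : V} (h : Con T om x y) (h' : Con T om y z) : Con T om x z :=
  fun χ hχ => (h χ hχ).trans (h' χ hχ)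
lemma Con.kept (hT : ∀ i, (T i).card = 3) (hv : ∀ i, om i ∈ T i) {i : ι} {p q : V}
    (hp : p ∈ T i) (hq : q ∈ T i) (hpo : p ≠ om i) (hqo : q ≠ om i) : Con T om p q :=
  fun _ hχ => good_eq hT hv (hχ i) hp hq hpo hqo

lemma ev_iff : Ev T om ↔ ∀ χ : V → ZMod 2, ∑ i, χ (om i) = ∑ i, ∑ v ∈ T i, χ v := by
  unfold Ev cr
  refine forall_congr' fun χ => ?_
  rw [Finset.sum_add_distrib]
  constructor
  · intro h; exact (z2eq h).symm
  · intro h; rw [h]; exact z2add _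

def sw (om : ι → V) (i : ι) (x y : V) : ι → V :=
  Function.update om i (if om i = x then y else x)

lemma sw_ne {i j : ι} {x y : V} (h : j ≠ i) : sw om i x y j = om j := by
  simp [sw, h]

lemma sw_valid (hv : ∀ i, om i ∈ T i) {i : ι} {x y : V} (h : Tog T om i x y) :
    ∀ j, sw om i x y j ∈ T j := by
  intro j
  by_cases hj : j = i
  · subst hj
    simp only [sw, Function.update_self]
    split_ifs
    · exact h.2.2.1
    · exact h.2.1
  · rw [sw_ne hj]; exact hv j

lemma sw_flip {i : ι} {x y : V} (h : Tog T om i x y) : Flip om (sw om i x y) i x y := by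
  unfold Flip sw
  simp only [Function.update_self]
  rcases h.2.2.2 with h1 | h1
  · left; exact ⟨h1, by simp [h1]⟩
  · right
    refine ⟨h1, ?_⟩
    rw [if_neg]
    rw [h1]; exact fun h2 => h.1 h2.symm

lemma sw_sum {i : ι} {x y : V} (h : Tog T om i x y) (χ : V → ZMod 2) :
    ∑ j, χ (sw om i x y j) = ∑ j, χ (om j) + χ x + χ y := by
  rw [← Finset.add_sum_erase _ _ (Finset.mem_univ i),
    ← Finset.add_sum_erase (a := i) Finset.univ (fun j => χ (om j)) (Finset.mem_univ i)]
  have : ∑ j ∈ Finset.univ.erase i, χ (sw om i x y j) = ∑ j ∈ Finset.univ.erase i, χ (om j) := by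
    apply Finset.sum_congr rfl
    intro j hj
    rw [sw_ne (Finset.ne_of_mem_erase hj)]
  rw [this]
  rcases sw_flip h with ⟨h1, h2⟩ | ⟨h1, h2⟩
  · rw [h1, h2]; linear_combination - z2add (χ x)
  · rw [h1, h2]; linear_combination - z2add (χ y)

lemma sw_tog {i j : ι} {x y u v : V} (h : Tog T om j u v) (hij : j ≠ i) :
    Tog T (sw om i x y) j u v := by
  unfold Tog; rw [sw_ne hij]; exact h

lemma flip_congr {om1 om2 om3 om4 : ι → V} {i : ι} {x y : V} (h : Flip om1 om2 i x y)
    (h1 : om1 i = om3 i) (h2 : om2 i = om4 i) : Flip om3 om4 i x y := by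
  unfold Flip at *; rw [← h1, ← h2]; exact h

lemma ex2 (hv : ∀ i, om i ∈ T i) (he : Ev T om) {i j : ι} {x y : V} (hi : Tog T om i x y)
    (hj : Tog T om j x y) (hij : i ≠ j) :
    ∃ om', (∀ i, om' i ∈ T i) ∧ Ev T om' ∧ (∀ k, k ≠ i → k ≠ j → om' k = om k) ∧
      Flip om om' i x y ∧ Flip om om' j x y := by
  have hj' := sw_tog (x := x) (y := y) hj hij.symm
  refine ⟨sw (sw om i x y) j x y, sw_valid (sw_valid hv hi) hj', ?_, ?_, ?_, ?_⟩
  · rw [ev_iff] at *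
    intro χ
    rw [sw_sum hj', sw_sum hi, he χ]
    linear_combination z2add (χ x) + z2add (χ y)
  · intro k h1 h2; rw [sw_ne h2, sw_ne h1]
  · exact flip_congr (sw_flip hi) rfl (by rw [sw_ne hij])
  · exact flip_congr (sw_flip hj') (by rw [sw_ne hij.symm]) rfl

lemma ex3 (hv : ∀ i, om i ∈ T i) (he : Ev T om) {i j k : ι} {x y z : V} (hi : Tog T om i x y)
    (hj : Tog T om j y z) (hk : Tog T om k z x) (hij : i ≠ j) (hik : i ≠ k) (hjk : j ≠ k) :
    ∃ om', (∀ i, om' i ∈ T i) ∧ Ev T om' ∧ (∀ l, l ≠ i → l ≠ j → l ≠ k → om' l = om l) ∧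
      Flip om om' i x y ∧ Flip om om' j y z ∧ Flip om om' k z x := by
  have hj' := sw_tog (x := x) (y := y) hj hij.symm
  have hk' := sw_tog (x := y) (y := z) (sw_tog (x := x) (y := y) hk hik.symm) hjk.symm
  refine ⟨sw (sw (sw om i x y) j y z) k z x, sw_valid (sw_valid (sw_valid hv hi) hj') hk',
    ?_, ?_, ?_, ?_, ?_⟩
  · rw [ev_iff] at *
    intro χ
    rw [sw_sum hk', sw_sum hj', sw_sum hi, he χ]
    linear_combination z2add (χ x) + z2add (χ y) + z2add (χ z)
  · intro l h1 h2 h3; rw [sw_ne h3, sw_ne h2, sw_ne h1]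
  · exact flip_congr (sw_flip hi) rfl (by rw [sw_ne hik, sw_ne hij])
  · exact flip_congr (sw_flip hj') (by rw [sw_ne hij.symm]) (by rw [sw_ne hjk])
  · exact flip_congr (sw_flip hk') (by rw [sw_ne hjk.symm, sw_ne hik.symm]) rfl

lemma ex4 (hv : ∀ i, om i ∈ T i) (he : Ev T om) {i j k l : ι} {x y z w : V}
    (hi : Tog T om i x y) (hj : Tog T om j y z) (hk : Tog T om k z w) (hl : Tog T om l w x)
    (hij : i ≠ j) (hik : i ≠ k) (hil : i ≠ l) (hjk : j ≠ k) (hjl : j ≠ l) (hkl : k ≠ l) :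
    ∃ om', (∀ i, om' i ∈ T i) ∧ Ev T om' ∧
      (∀ a, a ≠ i → a ≠ j → a ≠ k → a ≠ l → om' a = om a) ∧
      Flip om om' i x y ∧ Flip om om' j y z ∧ Flip om om' k z w ∧ Flip om om' l w x := by
  have hj' := sw_tog (x := x) (y := y) hj hij.symm
  have hk' := sw_tog (x := y) (y := z) (sw_tog (x := x) (y := y) hk hik.symm) hjk.symm
  have hl' := sw_tog (x := z) (y := w) (sw_tog (x := y) (y := z)
    (sw_tog (x := x) (y := y) hl hil.symm) hjl.symm) hkl.symm
  refine ⟨sw (sw (sw (sw om i x y) j y z) k z w) l w x,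
    sw_valid (sw_valid (sw_valid (sw_valid hv hi) hj') hk') hl', ?_, ?_, ?_, ?_, ?_, ?_⟩
  · rw [ev_iff] at *
    intro χ
    rw [sw_sum hl', sw_sum hk', sw_sum hj', sw_sum hi, he χ]
    linear_combination z2add (χ x) + z2add (χ y) + z2add (χ z) + z2add (χ w)
  · intro a h1 h2 h3 h4; rw [sw_ne h4, sw_ne h3, sw_ne h2, sw_ne h1]
  · exact flip_congr (sw_flip hi) rfl (by rw [sw_ne hil, sw_ne hik, sw_ne hij])
  · exact flip_congr (sw_flip hj') (by rw [sw_ne hij.symm]) (by rw [sw_ne hjl, sw_ne hjk])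
  · exact flip_congr (sw_flip hk') (by rw [sw_ne hjk.symm, sw_ne hik.symm]) (by rw [sw_ne hkl])
  · exact flip_congr (sw_flip hl') (by rw [sw_ne hkl.symm, sw_ne hjl.symm, sw_ne hil.symm]) rfl

end basics
section states
variable {V ι : Type} [Fintype V] [DecidableEq V] [Fintype ι] [DecidableEq ι]
variable {T : ι → Finset V} {om om' : ι → V} {S : V → Prop}

def Dx (T : ι → Finset V) (om : ι → V) (S : V → Prop) (i : ι) : Prop :=
  ∀ v ∈ T i, v ≠ om i → S v

structure St (T : ι → Finset V) (om : ι → V) (S : V → Prop) : Prop where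
  hT : ∀ i, (T i).card = 3
  hc : ∀ x y, x ≠ y → ∃ i, x ∈ T i ∧ y ∈ T i
  hv : ∀ i, om i ∈ T i
  he : Ev T om
  un : ∀ i p q, p ∈ T i → q ∈ T i → p ≠ om i → q ≠ om i → S p → S q
  sc : ∀ χ : V → ZMod 2, (∀ i, Dx T om S i → cr T om χ i = 0) → ∀ x y, S x → S y → χ x = χ y
  gr : ∀ om' : ι → V, (∀ i, om' i ∈ T i) → Ev T om' → ∀ x0,
    (∀ i, Dx T om S i → ∀ v ∈ T i, v ≠ om' i → Con T om' x0 v) →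
    ∀ k, ¬ Dx T om S k → (∀ v ∈ T k, v ≠ om' k → Con T om' x0 v) → False

lemma cr_add (χ ψ : V → ZMod 2) (i : ι) :
    cr T om (fun v => χ v + ψ v) i = cr T om χ i + cr T om ψ i := by
  unfold cr; rw [Finset.sum_add_distrib]; ring

lemma cr_congr {χ : V → ZMod 2} {i : ι} (h : om' i = om i) : cr T om' χ i = cr T om χ i := by
  unfold cr; rw [h]

lemma one_sum {F : ι → ZMod 2} (h : ∑ i, F i = 0) {g : ι} (hg : ∀ i, i ≠ g → F i = 0) :
    F g = 0 := by
  rw [Finset.sum_eq_single g (fun i _ hi => hg i hi) (by simp)] at h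
  exact h

lemma two_sum {F : ι → ZMod 2} (h : ∑ i, F i = 0) {g f : ι} (hgf : g ≠ f)
    (hg : ∀ i, i ≠ g → i ≠ f → F i = 0) : F g = F f := by
  rw [← Finset.add_sum_erase _ _ (Finset.mem_univ g),
    Finset.sum_eq_single f (fun i hi hif => hg i (Finset.ne_of_mem_erase hi) hif)
      (by simp [hgf.symm])] at h
  exact z2eq h

lemma bad_eq (hT : ∀ i, (T i).card = 3) (hv : ∀ i, om i ∈ T i) {χ : V → ZMod 2} {i : ι}
    (hg : cr T om χ i = 1) {p q : V} (hp : p ∈ T i) (hq : q ∈ T i) (hpq : p ≠ q) (hpo : p ≠ om i)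
    (hqo : q ≠ om i) : χ p = χ q + 1 := by
  rw [cr_eq hT hv χ hp hq hpq hpo hqo] at hg
  linear_combination hg - z2add (χ q)

namespace St

lemma Dof (h : St T om S) {i : ι} {p : V} (hp : p ∈ T i) (hpo : p ≠ om i) (hs : S p) :
    Dx T om S i := fun v hv hvo => h.un i p v hp hv hpo hvo hs

lemma Dof2 (h : St T om S) {i : ι} {p q : V} (hp : p ∈ T i) (hq : q ∈ T i) (hpq : p ≠ q)
    (hs : S p) (hs' : S q) : Dx T om S i := by
  by_cases hpo : p = om i
  · exact h.Dof hq (fun h => hpq (hpo.trans h.symm)) hs'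
  · exact h.Dof hp hpo hs

lemma nDof2 (h : St T om S) {i : ι} {p q : V} (hp : p ∈ T i) (hq : q ∈ T i) (hpq : p ≠ q)
    (hs : ¬ S p) (hs' : ¬ S q) : ¬ Dx T om S i := by
  intro hD
  by_cases hpo : p = om i
  · exact hs' (hD q hq (fun h => hpq (hpo.trans h.symm)))
  · exact hs (hD p hp hpo)

lemma nS (h : St T om S) {i : ι} (hi : ¬ Dx T om S i) {p : V} (hp : p ∈ T i) (hpo : p ≠ om i) :
    ¬ S p := fun hs => hi (h.Dof hp hpo hs)

/-- `D` index containing a vertex outside of `S` omits it -/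
lemma omD (h : St T om S) {i : ι} (hi : Dx T om S i) {p : V} (hp : p ∈ T i) (hs : ¬ S p) :
    om i = p := by
  by_contra hh
  exact hs (hi p hp (fun e => hh e.symm))

lemma omF (h : St T om S) {i : ι} (hi : ¬ Dx T om S i) {p : V} (hp : p ∈ T i) (hs : S p) :
    om i = p := by
  by_contra hh
  exact h.nS hi hp (fun e => hh e.symm) hs

lemma togUS (h : St T om S) {i : ι} {a b : V} (ha : a ∈ T i) (hb : b ∈ T i) (hsa : ¬ S a)
    (hsb : S b) : Tog T om i a b := by
  refine ⟨fun e => hsa (e ▸ hsb), ha, hb, ?_⟩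
  by_cases hi : Dx T om S i
  · exact Or.inl (h.omD hi ha hsa)
  · exact Or.inr (h.omF hi hb hsb)

open Classical in
lemma res_D (h : St T om S) (χ : V → ZMod 2) {i : ι} (hi : Dx T om S i) :
    cr T om (fun v => if S v then χ v else 0) i = cr T om χ i := by
  obtain ⟨p, q, hp, hq, hpq, hpo, hqo⟩ := exkept h.hT h.hv i
  rw [cr_eq h.hT h.hv _ hp hq hpq hpo hqo, cr_eq h.hT h.hv _ hp hq hpq hpo hqo,
    if_pos (hi p hp hpo), if_pos (hi q hq hqo)]

open Classical in
lemma res_F (h : St T om S) (χ : V → ZMod 2) {i : ι} (hi : ¬ Dx T om S i) :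
    cr T om (fun v => if S v then χ v else 0) i = 0 := by
  obtain ⟨p, q, hp, hq, hpq, hpo, hqo⟩ := exkept h.hT h.hv i
  rw [cr_eq h.hT h.hv _ hp hq hpq hpo hqo, if_neg (h.nS hi hp hpo), if_neg (h.nS hi hq hqo),
    add_zero]

open Classical in
lemma par1 (h : St T om S) {χ : V → ZMod 2} {i : ι}
    (hc : ∀ l, Dx T om S l → l ≠ i → cr T om χ l = 0) (hi : Dx T om S i) : cr T om χ i = 0 := by
  rw [← h.res_D χ hi]
  refine one_sum (h.he _) (fun l hl => ?_)
  by_cases hD : Dx T om S l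
  · rw [h.res_D χ hD]; exact hc l hD hl
  · exact h.res_F χ hD

open Classical in
lemma par2 (h : St T om S) {χ : V → ZMod 2} {i j : ι} (hij : i ≠ j)
    (hc : ∀ l, Dx T om S l → l ≠ i → l ≠ j → cr T om χ l = 0) (hi : Dx T om S i)
    (hj : Dx T om S j) : cr T om χ i = cr T om χ j := by
  rw [← h.res_D χ hi, ← h.res_D χ hj]
  refine two_sum (F := fun i => cr T om (fun v => if S v then χ v else 0) i) (h.he _) hij
    (fun l hl hl' => ?_)
  by_cases hD : Dx T om S l
  · rw [h.res_D χ hD]; exact hc l hD hl hl'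
  · exact h.res_F χ hD

lemma TC (h : St T om S) (hv' : ∀ i, om' i ∈ T i) (he' : Ev T om') {g f : ι}
    (hch : ∀ i, Dx T om S i → i ≠ g → i ≠ f → om' i = om i) {k : ι} (hk : ¬ Dx T om S k) {v w : V}
    (hvk : v ∈ T k) (hvo : v ≠ om' k) (hw : S w) (hwv : Con T om' w v) :
    Dx T om S g ∧ Dx T om S f ∧ g ≠ f ∧ ∃ χ : V → ZMod 2, (∀ i, cr T om' χ i = 0) ∧
      cr T om χ g = 1 ∧ cr T om χ f = 1 ∧
      (∀ i, Dx T om S i → i ≠ g → i ≠ f → cr T om χ i = 0) := by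
  by_cases hall : ∀ χ : V → ZMod 2, (∀ i, cr T om' χ i = 0) → ∀ x y, S x → S y → χ x = χ y
  · exfalso
    refine h.gr om' hv' he' w ?_ k hk ?_
    · intro i hi u hu huo
      obtain ⟨t, ht, hto, hto'⟩ := exthird h.hT (i := i) (om i) (om' i)
      have : Con T om' w t := fun χ hχ => hall χ hχ w t hw (hi t ht hto)
      exact this.trans (Con.kept h.hT hv' ht hu hto' huo)
    · intro u hu huo
      exact hwv.trans (Con.kept h.hT hv' hvk hu hvo huo)
  · push Not at hall
    obtain ⟨χ, hχ, x, y, hx, hy, hxy⟩ := hall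
    have h0 : ∀ i, Dx T om S i → i ≠ g → i ≠ f → cr T om χ i = 0 := by
      intro i hi h1 h2
      rw [← cr_congr (hch i hi h1 h2)]; exact hχ i
    have hex : ¬ ∀ i, Dx T om S i → cr T om χ i = 0 := fun hh => hxy (h.sc χ hh x y hx hy)
    have key : Dx T om S g ∧ Dx T om S f ∧ g ≠ f := by
      by_contra hcon
      apply hex
      intro i hi
      by_cases h1 : i = g
      · subst h1
        refine h.par1 (fun l hl hli => ?_) hi
        by_cases h2 : l = f
        · subst h2
          exact absurd ⟨hi, hl, fun e => hli e.symm⟩ hcon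
        · exact h0 l hl hli h2
      · by_cases h2 : i = f
        · subst h2
          refine h.par1 (fun l hl hli => ?_) hi
          by_cases h2 : l = g
          · subst h2
            exact absurd ⟨hl, hi, hli⟩ hcon
          · exact h0 l hl h2 hli
        · exact h0 i hi h1 h2
    refine ⟨key.1, key.2.1, key.2.2, χ, hχ, ?_⟩
    have he := h.par2 key.2.2 h0 key.1 key.2.1
    have hg1 : cr T om χ g = 1 := by
      apply z2ne
      intro hz
      apply hex
      intro i hi
      by_cases h1 : i = g
      · rw [h1, hz]
      · by_cases h2 : i = f
        · rw [h2, ← he, hz]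
        · exact h0 i hi h1 h2
    exact ⟨hg1, by rw [← he, hg1], h0⟩

open Classical in
lemma FC2 (h : St T om S) {χ : V → ZMod 2} (hχ : ∀ i, cr T om' χ i = 0) {i1 i2 : ι}
    (hch : ∀ i, ¬ Dx T om S i → i ≠ i1 → i ≠ i2 → om' i = om i) (h1 : ¬ Dx T om S i1)
    (h2 : ¬ Dx T om S i2) (h12 : i1 ≠ i2) : cr T om χ i1 = cr T om χ i2 := by
  have hD : ∀ i, Dx T om S i →
      cr T om (fun v => χ v + (if S v then χ v else 0)) i = 0 := by
    intro i hi; rw [cr_add, h.res_D χ hi]; exact z2add _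
  have hF : ∀ i, ¬ Dx T om S i →
      cr T om (fun v => χ v + (if S v then χ v else 0)) i = cr T om χ i := by
    intro i hi; rw [cr_add, h.res_F χ hi, add_zero]
  rw [← hF i1 h1, ← hF i2 h2]
  refine two_sum (F := fun i => cr T om (fun v => χ v + (if S v then χ v else 0)) i) (h.he _) h12
    (fun l hl hl' => ?_)
  by_cases hl0 : Dx T om S l
  · exact hD l hl0
  · rw [hF l hl0, ← cr_congr (hch l hl0 hl hl')]; exact hχ l

open Classical in
lemma FC1 (h : St T om S) {χ : V → ZMod 2} (hχ : ∀ i, cr T om' χ i = 0) {i1 : ι}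
    (hch : ∀ i, ¬ Dx T om S i → i ≠ i1 → om' i = om i) (h1 : ¬ Dx T om S i1) :
    cr T om χ i1 = 0 := by
  have hD : ∀ i, Dx T om S i →
      cr T om (fun v => χ v + (if S v then χ v else 0)) i = 0 := by
    intro i hi; rw [cr_add, h.res_D χ hi]; exact z2add _
  have hF : ∀ i, ¬ Dx T om S i →
      cr T om (fun v => χ v + (if S v then χ v else 0)) i = cr T om χ i := by
    intro i hi; rw [cr_add, h.res_F χ hi, add_zero]
  rw [← hF i1 h1]
  refine one_sum (h.he _) (fun l hl => ?_)
  by_cases hl0 : Dx T om S l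
  · exact hD l hl0
  · rw [hF l hl0, ← cr_congr (hch l hl0 hl)]; exact hχ l

/-- a potential without crossing on `D` indices, product form -/
lemma sc_mul (h : St T om S) {χ ψ : V → ZMod 2}
    (hh : ∀ i, Dx T om S i → ∀ p q, p ∈ T i → q ∈ T i → p ≠ q → p ≠ om i → q ≠ om i →
      χ p * ψ p = χ q * ψ q) {x y : V} (hx : S x) (hy : S y) : χ x * ψ x = χ y * ψ y := by
  refine h.sc (fun v => χ v * ψ v) (fun i hi => ?_) x y hx hy
  obtain ⟨p, q, hp, hq, hpq, hpo, hqo⟩ := exkept h.hT h.hv i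
  rw [cr_eq h.hT h.hv _ hp hq hpq hpo hqo, hh i hi p q hp hq hpq hpo hqo]
  exact z2add _

end St
end states
section caseI
variable {V ι : Type} [Fintype V] [DecidableEq V] [Fintype ι] [DecidableEq ι]
variable {T : ι → Finset V} {om om' : ι → V} {S : V → Prop}

lemma kept_cases (hT : ∀ i, (T i).card = 3) (hv : ∀ i, om i ∈ T i) {i : ι} {u v w : V}
    (hu : u ∈ T i) (hv' : v ∈ T i) (huv : u ≠ v) (huo : u ≠ om i) (hvo : v ≠ om i)
    (hw : w ∈ T i) (hwo : w ≠ om i) : w = u ∨ w = v := by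
  rcases trip' hT hu hv' (hv i) huv huo hvo w hw with h | h | h
  · exact Or.inl h
  · exact Or.inr h
  · exact absurd h hwo

lemma cr_const (hT : ∀ i, (T i).card = 3) (hv : ∀ i, om i ∈ T i) (c : ZMod 2) (i : ι) :
    cr T om (fun _ => c) i = 0 := by
  obtain ⟨p, q, hp, hq, hpq, hpo, hqo⟩ := exkept hT hv i
  rw [cr_eq hT hv _ hp hq hpq hpo hqo]; exact z2add _

/-- normalise a potential at a point -/
lemma norm_pot (hT : ∀ i, (T i).card = 3) (hv : ∀ i, om i ∈ T i) (χ : V → ZMod 2) (b : V)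
    (c : ZMod 2) : ∃ ψ : V → ZMod 2, (∀ i, cr T om ψ i = cr T om χ i) ∧ ψ b = c ∧
      ∀ x, ψ x = χ x + (χ b + c) := by
  refine ⟨fun v => χ v + (χ b + c), fun i => ?_, ?_, fun x => rfl⟩
  · rw [cr_add, cr_const hT hv, add_zero]
  · show χ b + (χ b + c) = c
    linear_combination z2add (χ b)

namespace St

/-- configuration of Case I -/
structure QI (T : ι → Finset V) (om : ι → V) (S : V → Prop) (p r : V) (b : V) (i j : ι)
    (χ : V → ZMod 2) : Prop where
  hb : S b
  bi : b ∈ T i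
  oi : om i = p
  bj : b ∈ T j
  oj : om j = r
  ci : cr T om χ i = 1
  cj : cr T om χ j = 1
  c0 : ∀ l, Dx T om S l → l ≠ i → l ≠ j → cr T om χ l = 0
  b1 : χ b = 1

lemma I0 (h : St T om S) (hF : ∀ i, ¬ Dx T om S i → ¬ S (om i)) {t : ι} (ht : ¬ Dx T om S t)
    {p q : V} (hp : p ∈ T t) (hq : q ∈ T t) (hpq : p ≠ q) (hpo : p ≠ om t) (hqo : q ≠ om t)
    {b : V} {i j : ι} (hb : S b) (hbi : b ∈ T i) (hi : om i = p) (hbj : b ∈ T j)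
    (hj : om j = om t) :
    ∃ om', (∀ i, om' i ∈ T i) ∧ Ev T om' ∧ (∀ l, l ≠ i → l ≠ j → l ≠ t → om' l = om l) ∧
      om' i = b ∧ om' j = b ∧ q ≠ om' t ∧ om t ≠ om' t ∧ (∀ d, d ∈ T i → d ≠ b → Con T om' q d) ∧
      (∀ d, d ∈ T j → d ≠ b → Con T om' q d) := by
  have hsp : ¬ S p := h.nS ht hp hpo
  have hsr : ¬ S (om t) := hF t ht
  have hbp : b ≠ p := fun e => hsp (e ▸ hb)
  have hbr : b ≠ om t := fun e => hsr (e ▸ hb)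
  have hDi : Dx T om S i := h.Dof hbi (by rw [hi]; exact hbp) hb
  have hDj : Dx T om S j := h.Dof hbj (by rw [hj]; exact hbr) hb
  have hij : i ≠ j := by rintro rfl; exact hpo (hi.symm.trans hj)
  have hit : i ≠ t := by rintro rfl; exact ht hDi
  have hjt : j ≠ t := by rintro rfl; exact ht hDj
  obtain ⟨om', hv', he', hch, f1, f2, f3⟩ := ex3 (x := p) (y := b) (z := om t) h.hv h.he
    (i := i) (j := j) (k := t)
    ⟨hbp.symm, hi ▸ h.hv i, hbi, Or.inl hi⟩ ⟨hbr, hbj, hj ▸ h.hv j, Or.inr hj⟩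
    ⟨hpo.symm, h.hv t, hp, Or.inl rfl⟩ hij hit hjt
  have o1 : om' i = b := by
    rcases f1 with f | f
    · exact f.2
    · exact absurd (f.1.symm.trans hi) hbp
  have o2 : om' j = b := by
    rcases f2 with f | f
    · exact absurd (f.1.symm.trans hj) hbr
    · exact f.2
  have o3 : om' t = p := by
    rcases f3 with f | f
    · exact f.2
    · exact absurd f.1.symm hpo
  have cpq : Con T om' q p := by
    intro χ hχ
    have := h.FC1 hχ (i1 := t) (fun l hl hlt => hch l (by rintro rfl; exact hl hDi)
      (by rintro rfl; exact hl hDj) hlt) ht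
    exact good_eq h.hT h.hv this hq hp hqo hpo
  have cqr : Con T om' q (om t) := Con.kept h.hT hv' hq (h.hv t) (by rw [o3]; exact hpq.symm)
    (by rw [o3]; exact hpo.symm)
  refine ⟨om', hv', he', hch, o1, o2, by rw [o3]; exact hpq.symm, by rw [o3]; exact hpo.symm,
    ?_, ?_⟩
  · intro d hd hdb
    exact cpq.trans (Con.kept h.hT hv' (hi ▸ h.hv i) hd (by rw [o1]; exact hbp.symm)
      (by rw [o1]; exact hdb))
  · intro d hd hdb
    exact cqr.trans (Con.kept h.hT hv' (hj ▸ h.hv j) hd (by rw [o2]; exact hbr.symm)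
      (by rw [o2]; exact hdb))

lemma I1 (h : St T om S) (hF : ∀ i, ¬ Dx T om S i → ¬ S (om i)) {t : ι} (ht : ¬ Dx T om S t)
    {p q : V} (hp : p ∈ T t) (hq : q ∈ T t) (hpq : p ≠ q) (hpo : p ≠ om t) (hqo : q ≠ om t)
    {b : V} {i : ι} (hb : S b) (hbi : b ∈ T i) (hi : om i = p) :
    ∃ j χ, QI T om S p (om t) b i j χ := by
  have hsr : ¬ S (om t) := hF t ht
  have hbr : b ≠ om t := fun e => hsr (e ▸ hb)
  obtain ⟨j, hbj, hrj⟩ := h.hc b (om t) hbr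
  have hDj : Dx T om S j := by
    by_contra hD
    exact hF j hD (by rw [h.omF hD hbj hb]; exact hb)
  have hj : om j = om t := h.omD hDj hrj hsr
  obtain ⟨om', hv', he', hch, o1, o2, o3, o3', c1, c2⟩ :=
    h.I0 hF ht hp hq hpq hpo hqo hb hbi hi hbj hj
  obtain ⟨d, hd, hbd, hdo⟩ := exkept1 h.hT h.hv hbj (by rw [hj]; exact hbr)
  obtain ⟨-, -, -, χ, hχ, ci, cj, c0⟩ := h.TC hv' he' (g := i) (f := j)
    (fun l hl h1 h2 => hch l h1 h2 (by rintro rfl; exact ht hl)) ht hq o3 (hDj d hd hdo)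
    (c2 d hd hbd.symm).symm
  obtain ⟨ψ, hψ, hψb, -⟩ := norm_pot h.hT h.hv χ b 1
  exact ⟨j, ψ, hb, hbi, hi, hbj, hj, by rw [hψ, ci], by rw [hψ, cj],
    fun l hl h1 h2 => by rw [hψ, c0 l hl h1 h2], hψb⟩

lemma I2 (h : St T om S) (hF : ∀ i, ¬ Dx T om S i → ¬ S (om i)) {t : ι} (ht : ¬ Dx T om S t)
    {p q : V} (hp : p ∈ T t) (hq : q ∈ T t) (hpq : p ≠ q) (hpo : p ≠ om t) (hqo : q ≠ om t)
    {b : V} {i j : ι} {χ : V → ZMod 2} (Q : QI T om S p (om t) b i j χ)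
    (hA : ∀ y, S y → χ y = 1 → y = b) : False := by
  have hsp : ¬ S p := h.nS ht hp hpo
  have hsr : ¬ S (om t) := hF t ht
  have hbp : b ≠ p := fun e => hsp (e ▸ Q.hb)
  have hbr : b ≠ om t := fun e => hsr (e ▸ Q.hb)
  have hDi : Dx T om S i := h.Dof Q.bi (by rw [Q.oi]; exact hbp) Q.hb
  have hDj : Dx T om S j := h.Dof Q.bj (by rw [Q.oj]; exact hbr) Q.hb
  have hij : i ≠ j := by rintro rfl; exact hpo (Q.oi.symm.trans Q.oj)
  obtain ⟨om', hv', he', hch, o1, o2, o3, o3', c1, c2⟩ :=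
    h.I0 hF ht hp hq hpq hpo hqo Q.hb Q.bi Q.oi Q.bj Q.oj
  obtain ⟨d, hd, hbd, hdo⟩ := exkept1 h.hT h.hv Q.bi (by rw [Q.oi]; exact hbp)
  have hz : ∀ y, S y → y ≠ b → χ y = 0 := by
    intro y hy hyb
    rcases z2 (χ y) with h0 | h0
    · exact h0
    · exact absurd (hA y hy h0) hyb
  have hsd : S d := hDi d hd hdo
  have hcon : ∀ y, S y → y ≠ b → Con T om' q y := by
    intro y hy hyb
    refine (c1 d hd hbd.symm).trans ?_
    intro ψ hψ
    have h0 : ∀ l, Dx T om S l → l ≠ i → l ≠ j → cr T om ψ l = 0 := by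
      intro l hl h1 h2
      rw [← cr_congr (hch l h1 h2 (by rintro rfl; exact ht hl))]; exact hψ l
    have he := h.par2 hij h0 hDi hDj
    rcases z2 (cr T om ψ i) with hc | hc
    · refine h.sc ψ (fun l hl => ?_) d y hsd hy
      by_cases h1 : l = i
      · rw [h1, hc]
      · by_cases h2 : l = j
        · rw [h2, ← he, hc]
        · exact h0 l hl h1 h2
    · have := h.sc (fun v => ψ v + χ v) (fun l hl => ?_) d y hsd hy
      · simp only [hz d hsd hbd.symm, hz y hy hyb, add_zero] at this
        exact this
      · rw [cr_add]
        by_cases h1 : l = i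
        · rw [h1, hc, Q.ci]; exact z2add _
        · by_cases h2 : l = j
          · rw [h2, ← he, hc, Q.cj]; exact z2add _
          · rw [h0 l hl h1 h2, Q.c0 l hl h1 h2, add_zero]
  refine h.gr om' hv' he' q ?_ t ht (fun v hv hvo => Con.kept h.hT hv' hq hv o3 hvo)
  intro l hl v hv hvo
  by_cases h1 : l = i
  · subst h1; exact c1 v hv (by rw [← o1]; exact hvo)
  by_cases h2 : l = j
  · subst h2; exact c2 v hv (by rw [← o2]; exact hvo)
  rw [hch l h1 h2 (by rintro rfl; exact ht hl)] at hvo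
  refine hcon v (hl v hv hvo) ?_
  rintro rfl
  obtain ⟨u, hu, hvu, huo⟩ := exkept1 h.hT h.hv hv hvo
  have := good_eq h.hT h.hv (Q.c0 l hl h1 h2) hu hv huo hvo
  exact hvu (hA u (hl u hu huo) (this.trans Q.b1)).symm

lemma I3 (h : St T om S) {p r : V} (hpr : p ≠ r) (hsp : ¬ S p) (hsr : ¬ S r) {b : V} {i j : ι}
    {χ : V → ZMod 2} (Q : QI T om S p r b i j χ) {x : V} {i2 j2 : ι} {χ2 : V → ZMod 2}
    (Q2 : QI T om S p r x i2 j2 χ2) (hx : χ x = 1) (hxb : x ≠ b) (hb : χ2 b = 0) :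
    ∀ y, S y → χ2 y = 1 → χ y = 1 := by
  have hbp : b ≠ p := fun e => hsp (e ▸ Q.hb)
  have hbr : b ≠ r := fun e => hsr (e ▸ Q.hb)
  have hxp : x ≠ p := fun e => hsp (e ▸ Q2.hb)
  have hxr : x ≠ r := fun e => hsr (e ▸ Q2.hb)
  have aux : ∀ l, om l ≠ b → om l ≠ x → b ∈ T l → x ∈ T l → cr T om χ l = 1 → False := by
    intro l h1 h2 h3 h4 h5
    have := bad_eq h.hT h.hv h5 h3 h4 hxb.symm h1.symm h2.symm
    rw [Q.b1, hx] at this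
    revert this; decide
  have e1 : i2 ≠ i := by
    rintro rfl
    exact aux i2 (by rw [Q.oi]; exact hbp.symm) (by rw [Q.oi]; exact hxp.symm) Q.bi Q2.bi Q.ci
  have e2 : i2 ≠ j := by rintro rfl; exact hpr (Q2.oi.symm.trans Q.oj)
  have e3 : j2 ≠ i := by rintro rfl; exact hpr (Q.oi.symm.trans Q2.oj)
  have e4 : j2 ≠ j := by
    rintro rfl
    exact aux j2 (by rw [Q.oj]; exact hbr.symm) (by rw [Q.oj]; exact hxr.symm) Q.bj Q2.bj Q.cj
  intro y hy hy1
  have key := h.sc_mul (χ := χ2) (ψ := fun v => 1 + χ v) ?_ hy Q.hb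
  · simp only [hb, hy1, zero_mul, one_mul] at key
    rcases z2 (χ y) with h0 | h0
    · rw [h0] at key; simp at key
    · exact h0
  · intro l hl u v hu hv huv huo hvo
    by_cases c1 : l = i ∨ l = j
    · have hbl : b ∈ T l ∧ b ≠ om l := by
        rcases c1 with rfl | rfl
        · exact ⟨Q.bi, by rw [Q.oi]; exact hbp⟩
        · exact ⟨Q.bj, by rw [Q.oj]; exact hbr⟩
      have hg : cr T om χ2 l = 0 := by
        rcases c1 with rfl | rfl
        · exact Q2.c0 _ hl e1.symm e3.symm
        · exact Q2.c0 _ hl e2.symm e4.symm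
      rw [good_eq h.hT h.hv hg hu hbl.1 huo hbl.2, good_eq h.hT h.hv hg hv hbl.1 hvo hbl.2, hb]
      simp
    · push Not at c1
      have hg := Q.c0 l hl c1.1 c1.2
      by_cases c2 : l = i2 ∨ l = j2
      · have hbl : x ∈ T l ∧ x ≠ om l := by
          rcases c2 with rfl | rfl
          · exact ⟨Q2.bi, by rw [Q2.oi]; exact hxp⟩
          · exact ⟨Q2.bj, by rw [Q2.oj]; exact hxr⟩
        rw [good_eq h.hT h.hv hg hu hbl.1 huo hbl.2, good_eq h.hT h.hv hg hv hbl.1 hvo hbl.2, hx,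
          z2add, mul_zero, mul_zero]
      · push Not at c2
        rw [good_eq h.hT h.hv hg hu hv huo hvo,
          good_eq h.hT h.hv (Q2.c0 l hl c2.1 c2.2) hu hv huo hvo]

open Classical in
lemma caseI (h : St T om S) (hF : ∀ i, ¬ Dx T om S i → ¬ S (om i)) {t : ι} (ht : ¬ Dx T om S t)
    (hS : ∃ b, S b) : False := by
  obtain ⟨p, q, hp, hq, hpq, hpo, hqo⟩ := exkept h.hT h.hv t
  have hsp : ¬ S p := h.nS ht hp hpo
  have hsr : ¬ S (om t) := hF t ht
  have exi : ∀ x, S x → ∃ i, x ∈ T i ∧ om i = p := by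
    intro x hx
    obtain ⟨i, hi, hpi⟩ := h.hc x p (fun e => hsp (e ▸ hx))
    have hD : Dx T om S i := by
      by_contra hD
      exact hF i hD (by rw [h.omF hD hi hx]; exact hx)
    exact ⟨i, hi, h.omD hD hpi hsp⟩
  have main : ∀ n, ∀ b i j χ, QI T om S p (om t) b i j χ →
      (Finset.univ.filter (fun y => S y ∧ χ y = 1)).card = n → False := by
    intro n
    induction n using Nat.strong_induction_on with
    | _ n ih =>
    intro b i j χ Q hn
    -- shrinking step
    have shr : ∀ x i2 j2 χ2, QI T om S p (om t) x i2 j2 χ2 → χ x = 1 → x ≠ b → χ2 b = 0 → False := by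
      intro x i2 j2 χ2 Q2 hx hxb hb0
      have := h.I3 hpo hsp hsr Q Q2 hx hxb hb0
      refine ih _ ?_ x i2 j2 χ2 Q2 rfl
      rw [← hn]
      apply Finset.card_lt_card
      rw [Finset.ssubset_iff_of_subset]
      · exact ⟨b, by simp [Q.hb, Q.b1], by simp [hb0]⟩
      · intro y hy
        simp only [Finset.mem_filter, Finset.mem_univ, true_and] at hy ⊢
        exact ⟨hy.1, this y hy.1 hy.2⟩
    by_cases hA : ∀ y, S y → χ y = 1 → y = b
    · exact h.I2 hF ht hp hq hpq hpo hqo Q hA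
    · push Not at hA
      obtain ⟨x, hx, hx1, hxb⟩ := hA
      obtain ⟨i2, hxi, hoi⟩ := exi x hx
      obtain ⟨j2, χ2, Q2⟩ := h.I1 hF ht hp hq hpq hpo hqo hx hxi hoi
      rcases z2 (χ2 b) with hb0 | hb1
      · exact shr x i2 j2 χ2 Q2 hx1 hxb hb0
      have hxp : x ≠ p := fun e => hsp (e ▸ hx)
      have hbp : b ≠ p := fun e => hsp (e ▸ Q.hb)
      have hbr : b ≠ om t := fun e => hsr (e ▸ Q.hb)
      have hxr : x ≠ om t := fun e => hsr (e ▸ hx)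
      obtain ⟨y, hy, hxy, hyo⟩ := exkept1 h.hT h.hv hxi (by rw [hoi]; exact hxp)
      have hD2 : Dx T om S i2 := h.Dof hxi (by rw [hoi]; exact hxp) hx
      have hsy : S y := hD2 y hy hyo
      have hyr : y ≠ om t := fun e => hsr (e ▸ hsy)
      have hxo : x ≠ om i2 := by rw [hoi]; exact hxp
      have e1 : i2 ≠ i := by
        rintro rfl
        have := bad_eq h.hT h.hv Q.ci hxi Q.bi hxb (by rw [hoi]; exact hxp) (by rw [hoi]; exact hbp)
        rw [hx1, Q.b1] at this
        revert this; decide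
      have e2 : i2 ≠ j := by rintro rfl; exact hpo (hoi.symm.trans Q.oj)
      have hy1 : χ y = 1 := by
        rw [good_eq h.hT h.hv (Q.c0 i2 hD2 e1 e2) hy hxi hyo hxo, hx1]
      have hy20 : χ2 y = 0 := by
        have := bad_eq h.hT h.hv Q2.ci hxi hy hxy hxo hyo
        rw [Q2.b1] at this
        linear_combination -this
      obtain ⟨j3, χ3, Q3⟩ := h.I1 hF ht hp hq hpq hpo hqo hsy hy hoi
      have hyb : y ≠ b := by
        rintro rfl
        rw [hy20] at hb1; revert hb1; decide
      rcases z2 (χ3 b) with hb0 | hb31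
      · exact shr y i2 j3 χ3 Q3 hy1 hyb hb0
      have hx30 : χ3 x = 0 := by
        have := bad_eq h.hT h.hv Q3.ci hy hxi hxy.symm hyo hxo
        rw [Q3.b1] at this
        linear_combination -this
      have key := h.sc_mul (χ := χ2) (ψ := χ3) ?_ hx Q.hb
      · rw [hx30, hb1, hb31] at key; simp at key
      · have a1 : ∀ l, cr T om χ2 l = 1 → x ∈ T l → x ≠ om l → ∀ v, v ∈ T l → v ≠ om l →
            χ2 v * χ3 v = 0 := by
          intro l hc hxl hxo v hv hvo
          by_cases hvx : v = x
          · rw [hvx, hx30, mul_zero]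
          · have := bad_eq h.hT h.hv hc hxl hv (fun e => hvx e.symm) hxo hvo
            rw [Q2.b1] at this
            have h0 : χ2 v = 0 := by linear_combination -this
            rw [h0, zero_mul]
        have a2 : ∀ l, cr T om χ3 l = 1 → y ∈ T l → y ≠ om l → ∀ v, v ∈ T l → v ≠ om l →
            χ2 v * χ3 v = 0 := by
          intro l hc hxl hxo v hv hvo
          by_cases hvx : v = y
          · rw [hvx, hy20, zero_mul]
          · have := bad_eq h.hT h.hv hc hxl hv (fun e => hvx e.symm) hxo hvo
            rw [Q3.b1] at this
            have h0 : χ3 v = 0 := by linear_combination -this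
            rw [h0, mul_zero]
        intro l hl u v hu hv huv huo hvo
        by_cases l1 : l = i2
        · subst l1
          rw [a1 l Q2.ci hxi hxo u hu huo, a1 l Q2.ci hxi hxo v hv hvo]
        by_cases l2 : l = j2
        · subst l2
          have hh : x ≠ om l := by rw [Q2.oj]; exact hxr
          rw [a1 l Q2.cj Q2.bj hh u hu huo, a1 l Q2.cj Q2.bj hh v hv hvo]
        by_cases l3 : l = j3
        · subst l3
          have hh : y ≠ om l := by rw [Q3.oj]; exact hyr
          rw [a2 l Q3.cj Q3.bj hh u hu huo, a2 l Q3.cj Q3.bj hh v hv hvo]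
        rw [good_eq h.hT h.hv (Q2.c0 l hl l1 l2) hu hv huo hvo,
          good_eq h.hT h.hv (Q3.c0 l hl l1 l3) hu hv huo hvo]
  obtain ⟨b, hb⟩ := hS
  obtain ⟨i, hbi, hi⟩ := exi b hb
  obtain ⟨j, χ, Q⟩ := h.I1 hF ht hp hq hpq hpo hqo hb hbi hi
  exact main _ b i j χ Q rfl

end St
end caseI
section caseII
variable {V ι : Type} [Fintype V] [DecidableEq V] [Fintype ι] [DecidableEq ι]
variable {T : ι → Finset V} {om om' : ι → V} {S : V → Prop}

lemma flipL {i : ι} {x y : V} (hf : Flip om om' i x y) (hxy : x ≠ y) (h : om i = x) :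
    om' i = y := by
  rcases hf with f | f
  · exact f.2
  · exact absurd (h.symm.trans f.1) hxy

lemma flipR {i : ι} {x y : V} (hf : Flip om om' i x y) (hxy : x ≠ y) (h : om i = y) :
    om' i = x := by
  rcases hf with f | f
  · exact absurd (f.1.symm.trans h) hxy
  · exact f.2

lemma Tog.symm {i : ι} {x y : V} (h : Tog T om i x y) : Tog T om i y x :=
  ⟨h.1.symm, h.2.2.1, h.2.1, h.2.2.2.symm⟩

namespace St

lemma neUS {a b : V} (ha : ¬ S a) (hb : S b) : a ≠ b := fun e => ha (e ▸ hb)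

lemma IIab (h : St T om S) {a b : V} (ha : ¬ S a) (hb : S b) {i j : ι} (hi : ¬ Dx T om S i)
    (hai : a ∈ T i) (hbi : b ∈ T i) (hij : i ≠ j) (haj : a ∈ T j) (hbj : b ∈ T j) : False := by
  have hab := neUS ha hb
  obtain ⟨om', hv', he', hch, f1, f2⟩ := ex2 h.hv h.he (h.togUS hai hbi ha hb)
    (h.togUS haj hbj ha hb) hij
  have o1 := flipR f1 hab (h.omF hi hbi hb)
  exact (h.TC hv' he' (g := j) (f := j)
    (fun l hl h1 _ => hch l (by rintro rfl; exact hi hl) h1) hi hbi (by rw [o1]; exact hab.symm)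
    hb (Con.refl _)).2.2.1 rfl

lemma IIc (h : St T om S) {a b b' : V} (ha : ¬ S a) (hb : S b) (hb' : S b')
    {i i' : ι} (hi : ¬ Dx T om S i) (hi' : ¬ Dx T om S i') (hai : a ∈ T i) (hbi : b ∈ T i)
    (hai' : a ∈ T i') (hbi' : b' ∈ T i') {k : ι} (hk : Tog T om k b b') : False := by
  have hab := neUS ha hb
  have o := h.omF hi hbi hb
  have o' := h.omF hi' hbi' hb'
  have hii : i ≠ i' := by rintro rfl; exact hk.1 (o.symm.trans o')
  have hD := h.Dof2 hk.2.1 hk.2.2.1 hk.1 hb hb'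
  obtain ⟨om', hv', he', hch, f1, f2, f3⟩ := ex3 h.hv h.he (h.togUS hai hbi ha hb) hk
    (h.togUS hai' hbi' ha hb').symm (by rintro rfl; exact hi hD) hii (by rintro rfl; exact hi' hD)
  have o1 := flipR f1 hab o
  exact (h.TC hv' he' (g := k) (f := k)
    (fun l hl h1 _ => hch l (by rintro rfl; exact hi hl) h1 (by rintro rfl; exact hi' hl)) hi hbi
    (by rw [o1]; exact hab.symm) hb (Con.refl _)).2.2.1 rfl

lemma IId (h : St T om S) {a a' b : V} (ha : ¬ S a) (ha' : ¬ S a') (hb : S b)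
    {i k : ι} (hi : ¬ Dx T om S i) (hai : a ∈ T i) (hbi : b ∈ T i) (hai' : a' ∉ T i)
    (hk : Tog T om k a a') : False := by
  have hab := neUS ha hb
  obtain ⟨j, hbj, haj⟩ := h.hc b a' (neUS ha' hb).symm
  have hkF : ¬ Dx T om S k := h.nDof2 hk.2.1 hk.2.2.1 hk.1 ha ha'
  have hik : i ≠ k := by rintro rfl; exact hai' hk.2.2.1
  have hij : i ≠ j := by rintro rfl; exact hai' haj
  have hkj : k ≠ j := by
    rintro rfl
    have := h.omF hkF hbj hb
    rcases hk.2.2.2 with e | e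
    · exact hab (e.symm.trans this)
    · exact neUS ha' hb (e.symm.trans this)
  obtain ⟨om', hv', he', hch, f1, f2, f3⟩ := ex3 h.hv h.he (h.togUS hai hbi ha hb).symm hk
    (h.togUS haj hbj ha' hb) hik hij hkj
  have o1 := flipL f1 hab.symm (h.omF hi hbi hb)
  exact (h.TC hv' he' (g := j) (f := j)
    (fun l hl h1 _ => hch l (by rintro rfl; exact hi hl) (by rintro rfl; exact hkF hl) h1) hi hbi
    (by rw [o1]; exact hab.symm) hb (Con.refl _)).2.2.1 rfl

lemma IIe (h : St T om S) {a : V} (ha : ¬ S a) {i k : ι} (hi : ¬ Dx T om S i)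
    (hs : S (om i)) (hai : a ∈ T i) (hk : ¬ Dx T om S k) (hak : a ∈ T k) : S (om k) := by
  by_contra hsk
  have hU : ∀ v ∈ T k, ¬ S v := by
    intro v hv
    by_cases e : v = om k
    · rw [e]; exact hsk
    · exact h.nS hk hv e
  have hao : a ≠ om i := neUS ha hs
  obtain ⟨c, hc, hac, hco⟩ := exkept1 h.hT h.hv hai hao
  have hTi := trip' h.hT hai hc (h.hv i) hac hao hco
  have nin : ∀ v ∈ T k, v ≠ a → v ≠ c → v ∉ T i := by
    intro v hv h1 h2 h3
    rcases hTi v h3 with e | e | e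
    · exact h1 e
    · exact h2 e
    · exact hU v hv (e ▸ hs)
  by_cases ho : om k = a
  · obtain ⟨x, hx, hxa, hxc⟩ := exthird h.hT (i := k) a c
    exact h.IId ha (hU x hx) hs hi hai (h.hv i) (nin x hx hxa hxc)
      ⟨hxa.symm, hak, hx, Or.inl ho⟩
  · by_cases hoc : om k = c
    · obtain ⟨x, hx, hxa, hxc⟩ := exthird h.hT (i := k) a c
      exact h.IId (hoc ▸ hsk) (hU x hx) hs hi hc (h.hv i) (nin x hx hxa hxc)
        ⟨hxc.symm, hoc ▸ h.hv k, hx, Or.inl hoc⟩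
    · exact h.IId ha hsk hs hi hai (h.hv i) (nin _ (h.hv k) ho hoc)
        ⟨fun e => ho e.symm, hak, h.hv k, Or.inr rfl⟩

lemma IIE (h : St T om S) {k0 : ι} (hk0 : ¬ Dx T om S k0) (hs0 : S (om k0)) :
    ∀ k, ¬ Dx T om S k → S (om k) := by
  intro k hk
  obtain ⟨a0, -, ha0, -, -, ha0o, -⟩ := exkept h.hT h.hv k0
  obtain ⟨a, -, ha, -, -, hao, -⟩ := exkept h.hT h.hv k
  have s0 := h.nS hk0 ha0 ha0o
  have s := h.nS hk ha hao
  by_cases e : a = a0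
  · subst e
    exact h.IIe s hk0 hs0 ha0 hk ha
  · obtain ⟨l, hl, hl0⟩ := h.hc a a0 e
    have hlF := h.nDof2 hl hl0 e s s0
    have := h.IIe s0 hk0 hs0 ha0 hlF hl0
    exact h.IIe s hlF this hl hk ha

lemma IIh (h : St T om S) {a b d : V} (ha : ¬ S a) (hb : S b) (hd : S d) {i g f : ι}
    (hi : ¬ Dx T om S i) (hai : a ∈ T i) (hbi : b ∈ T i) (hg : Dx T om S g) (hag : a ∈ T g)
    (hdg : d ∈ T g) (hf : Tog T om f d b) :
    ∃ α : V → ZMod 2, cr T om α g = 1 ∧ cr T om α f = 1 ∧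
      (∀ l, Dx T om S l → l ≠ g → l ≠ f → cr T om α l = 0) ∧ α d = 1 ∧ α b = 0 := by
  have hab := neUS ha hb
  have had := neUS ha hd
  have hfD := h.Dof2 hf.2.1 hf.2.2.1 hf.1 hd hb
  have hig : i ≠ g := by rintro rfl; exact hi hg
  have hif : i ≠ f := by rintro rfl; exact hi hfD
  have hgf : g ≠ f := by rintro rfl; exact h.IIab ha hb hi hai hbi hig hag hf.2.2.1
  have og := h.omD hg hag ha
  have oi := h.omF hi hbi hb
  obtain ⟨om', hv', he', hch, f1, f2, f3⟩ := ex3 h.hv h.he (h.togUS hai hbi ha hb).symm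
    (h.togUS hag hdg ha hd) hf hig hif hgf
  have o1 := flipL f1 hab.symm oi
  have o2 := flipL f2 had og
  obtain ⟨-, -, -, χ, hχ, c1, c2, c0⟩ := h.TC hv' he' (g := g) (f := f)
    (fun l hl h1 h2 => hch l (by rintro rfl; exact hi hl) h1 h2) hi hbi
    (by rw [o1]; exact hab.symm) hb (Con.refl _)
  have hdo : d ≠ om g := by rw [og]; exact had.symm
  obtain ⟨d', hd', hdd, hd'o⟩ := exkept1 h.hT h.hv hdg hdo
  have hao : a ≠ om i := by rw [oi]; exact hab
  obtain ⟨c, hc, hac, hco⟩ := exkept1 h.hT h.hv hai hao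
  have e1 : χ d' = χ a := good_eq h.hT hv' (hχ g) hd' hag (by rw [o2]; exact hdd.symm)
    (by rw [o2]; exact had)
  have e2 : χ c = χ b := good_eq h.hT hv' (hχ i) hc hbi (by rw [o1]; exact hac.symm)
    (by rw [o1]; exact hab.symm)
  have e3 : χ a = χ c := good_eq h.hT h.hv (h.FC1 hχ (i1 := i) (fun l hl h1 => hch l h1
    (by rintro rfl; exact hl hg) (by rintro rfl; exact hl hfD)) hi) hai hc hao hco
  have e4 := bad_eq h.hT h.hv c1 hdg hd' hdd hdo hd'o
  obtain ⟨ψ, hψ, hψd, hψx⟩ := norm_pot h.hT h.hv χ d 1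
  refine ⟨ψ, by rw [hψ, c1], by rw [hψ, c2], fun l hl h1 h2 => by rw [hψ, c0 l hl h1 h2], hψd, ?_⟩
  rw [hψx b, ← e2, ← e3, ← e1, e4]
  have := z2add (χ d')
  have h2 := z2add (1 : ZMod 2)
  linear_combination this + h2

lemma IIg (h : St T om S) {a b1 b2 d : V} (ha : ¬ S a) (hb1 : S b1) (hb2 : S b2) (hd : S d)
    {i1 i2 f1 : ι} (hi1 : ¬ Dx T om S i1) (hi2 : ¬ Dx T om S i2) (ha1 : a ∈ T i1) (ha2 : a ∈ T i2)
    (hbi1 : b1 ∈ T i1) (hbi2 : b2 ∈ T i2) (h12 : b1 ≠ b2) (hf1 : Tog T om f1 d b1) : False := by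
  have hab1 := neUS ha hb1
  have hab2 := neUS ha hb2
  have had := neUS ha hd
  obtain ⟨g, hag, hdg⟩ := h.hc a d had
  have hg : Dx T om S g := by
    by_contra hg
    exact h.IIc ha hd hb1 hg hi1 hag hdg ha1 hbi1 hf1
  have hdb2 : d ≠ b2 := by
    rintro rfl
    exact h.IIc ha hd hb1 hi2 hi1 ha2 hbi2 ha1 hbi1 hf1
  have hdb1 := hf1.1
  have hg1 : b1 ∉ T g := fun e => h.IIab ha hb1 hi1 ha1 hbi1 (by rintro rfl; exact hi1 hg) hag e
  have hg2 : b2 ∉ T g := fun e => h.IIab ha hb2 hi2 ha2 hbi2 (by rintro rfl; exact hi2 hg) hag e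
  have nt : ∀ k, ¬ Tog T om k b1 b2 := fun k hk =>
    h.IIc ha hb1 hb2 hi1 hi2 ha1 hbi1 ha2 hbi2 hk
  have caseA : ∀ f, Tog T om f d b1 → b2 ∈ T f → False := by
    intro f hf hf2
    have n1 : om f ≠ b1 := fun e => nt f ⟨h12, hf.2.2.1, hf2, Or.inl e⟩
    have n2 : om f ≠ b2 := fun e => nt f ⟨h12, hf.2.2.1, hf2, Or.inr e⟩
    have od : om f = d := hf.2.2.2.resolve_right n1
    obtain ⟨α, ag, af, a0, ad, ab⟩ := h.IIh ha hb1 hd hi1 ha1 hbi1 hg hag hdg hf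
    obtain ⟨β, bg, bf, b0, bd, bb⟩ := h.IIh ha hb2 hd hi2 ha2 hbi2 hg hag hdg
      (f := f) ⟨hdb2, hf.2.1, hf2, Or.inl od⟩
    have := h.sc (fun v => α v + β v) (fun l hl => ?_) d b2 hd hb2
    · simp only [ad, bd, bb, z2add, add_zero] at this
      have h3 := bad_eq h.hT h.hv af hf.2.2.1 hf2 h12 n1.symm n2.symm
      rw [ab, ← this] at h3
      simp at h3
    · rw [cr_add]
      by_cases l1 : l = g
      · rw [l1, ag, bg]; exact z2add _
      by_cases l2 : l = f
      · rw [l2, af, bf]; exact z2add _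
      rw [a0 l hl l1 l2, b0 l hl l1 l2, add_zero]
  have hf12 : b2 ∉ T f1 := caseA f1 hf1
  obtain ⟨α, ag, af, a0, ad, ab⟩ := h.IIh ha hb1 hd hi1 ha1 hbi1 hg hag hdg hf1
  obtain ⟨k, k1, k2⟩ := h.hc b1 b2 h12
  have kD := h.Dof2 k1 k2 h12 hb1 hb2
  have ko1 : b1 ≠ om k := fun e => nt k ⟨h12, k1, k2, Or.inl e.symm⟩
  have ko2 : b2 ≠ om k := fun e => nt k ⟨h12, k1, k2, Or.inr e.symm⟩
  have kg : k ≠ g := by rintro rfl; exact hg1 k1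
  have kf1 : k ≠ f1 := by rintro rfl; exact hf12 k2
  have ab2 : α b2 = 0 := by
    rw [← ab]; exact good_eq h.hT h.hv (a0 k kD kg kf1) k2 k1 ko2 ko1
  obtain ⟨f2, fd, fb⟩ := h.hc d b2 hdb2
  have f2D := h.Dof2 fd fb hdb2 hd hb2
  have f2g : f2 ≠ g := by rintro rfl; exact hg2 fb
  have f2f1 : f2 ≠ f1 := by rintro rfl; exact hf12 fb
  have hf2 : Tog T om f2 d b2 := by
    by_contra hn
    have n1 : d ≠ om f2 := fun e => hn ⟨hdb2, fd, fb, Or.inl e.symm⟩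
    have n2 : b2 ≠ om f2 := fun e => hn ⟨hdb2, fd, fb, Or.inr e.symm⟩
    have := good_eq h.hT h.hv (a0 f2 f2D f2g f2f1) fd fb n1 n2
    rw [ad, ab2] at this
    revert this; decide
  have hf21 : b1 ∉ T f2 := by
    intro hin
    have n2 : om f2 ≠ b2 := fun e => nt f2 ⟨h12, hin, fb, Or.inr e⟩
    exact caseA f2 ⟨hdb1, fd, hin, Or.inl (hf2.2.2.2.resolve_right n2)⟩ fb
  have kf2 : k ≠ f2 := by rintro rfl; exact hf21 k1
  obtain ⟨β, bg, bf, b0, bd, bb⟩ := h.IIh ha hb2 hd hi2 ha2 hbi2 hg hag hdg hf2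
  have bb1 : β b1 = 0 := by
    rw [← bb]; exact good_eq h.hT h.hv (b0 k kD kg kf2) k1 k2 ko1 ko2
  have f1D := h.Dof2 hf1.2.1 hf1.2.2.1 hdb1 hd hb1
  have f1g : f1 ≠ g := by rintro rfl; exact hg1 hf1.2.2.1
  have o1 := h.omF hi1 hbi1 hb1
  have o2 := h.omF hi2 hbi2 hb2
  have i12 : i1 ≠ i2 := by rintro rfl; exact h12 (o1.symm.trans o2)
  obtain ⟨om', hv', he', hch, p1, p2, p3, p4⟩ := ex4 h.hv h.he (h.togUS ha1 hbi1 ha hb1)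
    hf1.symm hf2 (h.togUS ha2 hbi2 ha hb2).symm (by rintro rfl; exact hi1 f1D)
    (by rintro rfl; exact hi1 f2D) i12 f2f1.symm (by rintro rfl; exact hi2 f1D)
    (by rintro rfl; exact hi2 f2D)
  have q1 := flipR p1 hab1 o1
  have q2 := flipL p4 hab2.symm o2
  obtain ⟨-, -, -, ρ, hρ, c1, c2, c0⟩ := h.TC hv' he' (g := f1) (f := f2)
    (fun l hl h1 h2 => hch l (by rintro rfl; exact hi1 hl) h1 h2 (by rintro rfl; exact hi2 hl))
    hi1 hbi1 (by rw [q1]; exact hab1.symm) hb1 (Con.refl _)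
  have hao1 : a ≠ om i1 := by rw [o1]; exact hab1
  have hao2 : a ≠ om i2 := by rw [o2]; exact hab2
  have hs := h.sc (fun v => (α v + β v) + ρ v) (fun l hl => ?_) d b1 hd hb1
  · simp only [ad, bd, ab, bb1, z2add, zero_add] at hs
    -- now rho d = rho b1
    obtain ⟨x, hx, hxd, hxb⟩ := exthird h.hT (i := f1) d b1
    rcases p2 with ⟨e1, e2⟩ | ⟨e1, e2⟩
    · have t1 := bad_eq h.hT h.hv c1 hf1.2.1 hx hxd.symm (by rw [e1]; exact hdb1)
        (by rw [e1]; exact hxb)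
      have t2 := good_eq h.hT hv' (hρ f1) hf1.2.2.1 hx (by rw [e2]; exact hdb1.symm)
        (by rw [e2]; exact hxd)
      rw [hs, t2] at t1
      simp at t1
    · have t1 := bad_eq h.hT h.hv c1 hf1.2.2.1 hx hxb.symm (by rw [e1]; exact hdb1.symm)
        (by rw [e1]; exact hxd)
      have t2 := good_eq h.hT hv' (hρ f1) hf1.2.1 hx (by rw [e2]; exact hdb1)
        (by rw [e2]; exact hxb)
      rw [← hs, t2] at t1
      simp at t1
  · rw [cr_add, cr_add]
    by_cases l1 : l = g
    · rw [l1, ag, bg, c0 g hg f1g.symm f2g.symm]; rfl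
    by_cases l2 : l = f1
    · rw [l2, af, b0 f1 f1D f1g f2f1.symm, c1]; rfl
    by_cases l3 : l = f2
    · rw [l3, bf, a0 f2 f2D f2g f2f1, c2]; rfl
    rw [a0 l hl l1 l2, b0 l hl l1 l3, c0 l hl l2 l3]; rfl

/-- indices through two elements of `In a` -/
lemma IIi (h : St T om S) {a b1 b2 : V} (ha : ¬ S a) (hb1 : S b1) (hb2 : S b2)
    {i1 i2 k : ι} (hi1 : ¬ Dx T om S i1) (hi2 : ¬ Dx T om S i2) (ha1 : a ∈ T i1) (ha2 : a ∈ T i2)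
    (hbi1 : b1 ∈ T i1) (hbi2 : b2 ∈ T i2) (h12 : b1 ≠ b2) (k1 : b1 ∈ T k) (k2 : b2 ∈ T k) :
    Dx T om S k ∧ ¬ S (om k) ∧ om k ≠ a := by
  have kD := h.Dof2 k1 k2 h12 hb1 hb2
  have nt : ¬ Tog T om k b1 b2 := fun hk =>
    h.IIc ha hb1 hb2 hi1 hi2 ha1 hbi1 ha2 hbi2 hk
  have n1 : om k ≠ b1 := fun e => nt ⟨h12, k1, k2, Or.inl e⟩
  refine ⟨kD, ?_, ?_⟩
  · intro hs
    exact h.IIg ha hb1 hb2 hs hi1 hi2 ha1 ha2 hbi1 hbi2 h12 (f1 := k) ⟨n1, h.hv k, k1, Or.inl rfl⟩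
  · intro e
    exact h.IIab ha hb1 hi1 ha1 hbi1 (by rintro rfl; exact hi1 kD) (e ▸ h.hv k) k1

end St
end caseII
section caseIIend
variable {V ι : Type} [Fintype V] [DecidableEq V] [Fintype ι] [DecidableEq ι]
variable {T : ι → Finset V} {om om' : ι → V} {S : V → Prop}

namespace St

/-- the set `In a` -/
def Inn (T : ι → Finset V) (om : ι → V) (S : V → Prop) (a b : V) : Prop :=
  S b ∧ ∃ i, ¬ Dx T om S i ∧ a ∈ T i ∧ b ∈ T i

lemma IIi' (h : St T om S) {a b1 b2 : V} (ha : ¬ S a) (hb1 : Inn T om S a b1)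
    (hb2 : Inn T om S a b2) (h12 : b1 ≠ b2) {k : ι} (k1 : b1 ∈ T k) (k2 : b2 ∈ T k) :
    Dx T om S k ∧ ¬ S (om k) ∧ om k ≠ a := by
  obtain ⟨s1, i1, f1, a1, m1⟩ := hb1
  obtain ⟨s2, i2, f2, a2, m2⟩ := hb2
  exact h.IIi ha s1 s2 f1 f2 a1 a2 m1 m2 h12 k1 k2

lemma IIj (h : St T om S) {a b p b' p' w : V} (ha : ¬ S a) (hb : Inn T om S a b)
    (hp : Inn T om S a p) (hb' : Inn T om S a b') (hp' : Inn T om S a p') (hw : Inn T om S a w)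
    (hbp : b ≠ p) (hbp' : b' ≠ p') (n1 : b ≠ b') (n2 : b ≠ p') (n3 : b' ≠ p)
    (w1 : w ≠ b) (w2 : w ≠ p) (w3 : w ≠ b') {k k' : ι} (kb : b ∈ T k) (kp : p ∈ T k)
    (kb' : b' ∈ T k') (kp' : p' ∈ T k') (ho : om k = om k') : False := by
  obtain ⟨D1, s1, na1⟩ := h.IIi' ha hb hp hbp kb kp
  obtain ⟨D2, s2, na2⟩ := h.IIi' ha hb' hp' hbp' kb' kp'
  have ne : ∀ {x}, Inn T om S a x → x ≠ om k := fun hx => (neUS s1 hx.1).symm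
  have ne' : ∀ {x}, Inn T om S a x → x ≠ om k' := fun hx => (neUS s2 hx.1).symm
  have c : ∀ {x}, x ∈ T k → Inn T om S a x → x = b ∨ x = p := fun hx hi =>
    kept_cases h.hT h.hv kb kp hbp (ne hb) (ne hp) hx (ne hi)
  have c' : ∀ {x}, x ∈ T k' → Inn T om S a x → x = b' ∨ x = p' := fun hx hi =>
    kept_cases h.hT h.hv kb' kp' hbp' (ne' hb') (ne' hp') hx (ne' hi)
  have hwk : w ∉ T k := by
    intro hx; rcases c hx hw with e | e
    · exact w1 e
    · exact w2 e
  have hbk' : b ∉ T k' := by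
    intro hx; rcases c' hx hb with e | e
    · exact n1 e
    · exact n2 e
  have kk : k ≠ k' := by rintro rfl; exact hbk' kb
  obtain ⟨sb, i, hi, ai, bi⟩ := id hb
  obtain ⟨sb', i', hi', ai', bi'⟩ := id hb'
  have o := h.omF hi bi sb
  have o' := h.omF hi' bi' sb'
  have hab := neUS ha sb
  have ii : i ≠ i' := by rintro rfl; exact n1 (o.symm.trans o')
  obtain ⟨om', hv', he', hch, p1, p2, p3, p4⟩ := ex4 h.hv h.he (h.togUS ai bi ha sb)
    (j := k) (z := om k) ⟨ne hb, kb, h.hv k, Or.inr rfl⟩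
    (k := k') ⟨ne hb' |>.symm, ho ▸ h.hv k', kb', Or.inl ho.symm⟩
    (h.togUS ai' bi' ha sb').symm (by rintro rfl; exact hi D1) (by rintro rfl; exact hi D2) ii kk
    (by rintro rfl; exact hi' D1) (by rintro rfl; exact hi' D2)
  have q1 := flipR p1 hab o
  obtain ⟨-, -, -, χ, hχ, c1, c2, c0⟩ := h.TC hv' he' (g := k) (f := k')
    (fun l hl h1 h2 => hch l (by rintro rfl; exact hi hl) h1 h2 (by rintro rfl; exact hi' hl))
    hi bi (by rw [q1]; exact hab.symm) sb (Con.refl _)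
  have t := bad_eq h.hT h.hv c1 kb kp hbp (ne hb) (ne hp)
  obtain ⟨l1, lb, lw⟩ := h.hc b w w1.symm
  obtain ⟨L1, sl1, -⟩ := h.IIi' ha hb hw w1.symm lb lw
  obtain ⟨l2, mp, mw⟩ := h.hc p w w2.symm
  obtain ⟨L2, sl2, -⟩ := h.IIi' ha hp hw w2.symm mp mw
  have g1 := good_eq h.hT h.hv (c0 l1 L1 (by rintro rfl; exact hwk lw) (by rintro rfl; exact hbk' lb))
    lb lw (neUS sl1 hb.1).symm (neUS sl1 hw.1).symm
  have g2 := good_eq h.hT h.hv (c0 l2 L2 (by rintro rfl; exact hwk mw) (by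
    rintro rfl
    rcases c' mp hp with e | e
    · exact n3 e.symm
    · rcases c' mw hw with e' | e'
      · exact w3 e'
      · exact w2 (e'.trans e.symm)))
    mp mw (neUS sl2 hp.1).symm (neUS sl2 hw.1).symm
  rw [g1, g2] at t
  simp at t

open Classical in
lemma caseII (h : St T om S) {k0 : ι} (hk0 : ¬ Dx T om S k0) (hs0 : S (om k0)) : False := by
  have : Nonempty ι := ⟨k0⟩
  have hE := h.IIE hk0 hs0
  obtain ⟨a, -, ha0, -, -, hao, -⟩ := exkept h.hT h.hv k0
  have ha := h.nS hk0 ha0 hao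
  set K := Finset.univ.filter (fun i => ¬ Dx T om S i ∧ a ∈ T i) with hK
  have memK : ∀ i, i ∈ K ↔ ¬ Dx T om S i ∧ a ∈ T i := by intro i; simp [hK]
  have oK : ∀ i ∈ K, a ≠ om i := fun i hi => neUS ha (hE i ((memK i).1 hi).1)
  -- parity
  have hev : (K.card : ZMod 2) = 0 := by
    have := h.he (fun v => if v = a then 1 else 0)
    rw [← this, Finset.card_eq_sum_ones, Nat.cast_sum, Nat.cast_one, hK, Finset.sum_filter]
    refine Finset.sum_congr rfl fun i _ => ?_
    by_cases hi : ¬ Dx T om S i ∧ a ∈ T i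
    · rw [if_pos hi]
      have h1 := oK i ((memK i).2 hi)
      obtain ⟨q, hq, haq, hqo⟩ := exkept1 h.hT h.hv hi.2 h1
      rw [cr_eq h.hT h.hv _ hi.2 hq haq h1 hqo, if_pos rfl, if_neg haq.symm, add_zero]
    · rw [if_neg hi]
      obtain ⟨p, q, hp, hq, hpq, hpo, hqo⟩ := exkept h.hT h.hv i
      have hne : ∀ x ∈ T i, x ≠ om i → x ≠ a := by
        rintro x hx hxo rfl
        apply hi
        exact ⟨fun hD => ha (hD x hx hxo), hx⟩
      rw [cr_eq h.hT h.hv _ hp hq hpq hpo hqo, if_neg (hne p hp hpo), if_neg (hne q hq hqo),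
        add_zero]
  have hev2 : 2 ∣ K.card := (ZMod.natCast_eq_zero_iff _ _).1 hev
  have hpos : 0 < K.card := Finset.card_pos.2 ⟨k0, (memK k0).2 ⟨hk0, ha0⟩⟩
  -- om is injective on K
  have hinj : ∀ i ∈ K, ∀ j ∈ K, om i = om j → i = j := by
    intro i hi j hj e
    by_contra hij
    have hi' := (memK i).1 hi
    have hj' := (memK j).1 hj
    exact h.IIab ha (hE i hi'.1) hi'.1 hi'.2 (h.hv i) hij hj'.2 (e ▸ h.hv j)
  have hInn : ∀ i ∈ K, Inn T om S a (om i) := fun i hi =>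
    ⟨hE i ((memK i).1 hi).1, i, ((memK i).1 hi).1, ((memK i).1 hi).2, h.hv i⟩
  -- U minus a
  set U := (Finset.univ.filter (fun v => ¬ S v)).erase a with hU
  have memU : ∀ v, v ∈ U ↔ v ≠ a ∧ ¬ S v := by intro v; simp [hU]
  have hUK : ∀ v ∈ U, ∃ i ∈ K, v ∈ T i := by
    intro v hv
    obtain ⟨hva, hsv⟩ := (memU v).1 hv
    obtain ⟨i, hi, hai⟩ := h.hc v a hva
    exact ⟨i, (memK i).2 ⟨h.nDof2 hi hai hva hsv ha, hai⟩, hi⟩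
  have hcard : U.card ≤ K.card := by
    choose! φ hφ1 hφ2 using hUK
    refine Finset.card_le_card_of_injOn φ (fun v hv => hφ1 v hv) ?_
    intro v hv v' hv' e
    have hv0 := (memU v).1 hv
    have hv0' := (memU v').1 hv'
    by_contra hne
    have hk := (memK _).1 (hφ1 v hv)
    have so := hE _ hk.1
    rcases kept_cases h.hT h.hv (hφ2 v hv) hk.2 hv0.1 (neUS hv0.2 so) (neUS ha so)
      (e ▸ hφ2 v' hv') (neUS hv0'.2 so) with e1 | e1
    · exact hne e1.symm
    · exact hv0'.1 e1
  by_cases h4 : 4 ≤ K.card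
  · -- many
    set P := K.image om with hP
    have hPc : P.card = K.card := Finset.card_image_of_injOn (fun i hi j hj e => hinj i hi j hj e)
    have hPI : ∀ b ∈ P, Inn T om S a b := by
      intro b hb
      obtain ⟨i, hi, rfl⟩ := Finset.mem_image.1 hb
      exact hInn i hi
    have hex : ∀ s ∈ P.powersetCard 2, ∃ k, s ⊆ T k := by
      intro s hs
      obtain ⟨b, b', hbb, rfl⟩ := Finset.card_eq_two.1 (Finset.mem_powersetCard.1 hs).2
      obtain ⟨k, h1, h2⟩ := h.hc b b' hbb
      refine ⟨k, ?_⟩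
      intro x hx
      simp only [Finset.mem_insert, Finset.mem_singleton] at hx
      rcases hx with rfl | rfl <;> assumption
    choose! κ hκ using hex
    have hle : (P.powersetCard 2).card ≤ U.card := by
      refine Finset.card_le_card_of_injOn (fun s => om (κ s)) ?_ ?_
      · intro s hs
        have hs' := Finset.mem_powersetCard.1 hs
        have hsub := hκ s hs
        obtain ⟨b, b', hbb, hsb⟩ := Finset.card_eq_two.1 hs'.2
        have m1 : b ∈ s := by rw [hsb]; simp
        have m2 : b' ∈ s := by rw [hsb]; simp
        have := h.IIi' ha (hPI b (hs'.1 m1)) (hPI b' (hs'.1 m2)) hbb (hsub m1) (hsub m2)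
        exact (memU _).2 ⟨this.2.2, this.2.1⟩
      · intro s hs s' hs' e
        by_contra hne
        have hs1 := Finset.mem_powersetCard.1 hs
        have hs1' := Finset.mem_powersetCard.1 hs'
        have hsub := hκ s hs
        have hsub' := hκ s' hs'
        obtain ⟨b, hb, hbn⟩ : ∃ b ∈ s, b ∉ s' := by
          by_contra hcon
          push Not at hcon
          exact hne (Finset.eq_of_subset_of_card_le hcon (by rw [hs1.2, hs1'.2]))
        obtain ⟨b', hb', hbn'⟩ : ∃ b ∈ s', b ∉ s := by
          by_contra hcon
          push Not at hcon
          exact hne (Finset.eq_of_subset_of_card_le hcon (by rw [hs1.2, hs1'.2])).symm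
        obtain ⟨p, hp, hpb⟩ := Finset.exists_mem_ne (by rw [hs1.2]; norm_num) b
        obtain ⟨p', hp', hpb'⟩ := Finset.exists_mem_ne (by rw [hs1'.2]; norm_num) b'
        obtain ⟨w, hw, hwn⟩ : ∃ w ∈ P, w ∉ ({b, p, b'} : Finset V) := by
          by_contra hcon
          push Not at hcon
          have := (Finset.card_le_card (show P ⊆ {b, p, b'} from hcon)).trans Finset.card_le_three
          omega
        simp only [Finset.mem_insert, Finset.mem_singleton, not_or] at hwn
        exact h.IIj ha (hPI b (hs1.1 hb)) (hPI p (hs1.1 hp)) (hPI b' (hs1'.1 hb'))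
          (hPI p' (hs1'.1 hp')) (hPI w hw) hpb.symm hpb'.symm (fun e => hbn (e ▸ hb'))
          (fun e => hbn (e ▸ hp')) (fun e => hbn' (e ▸ hp)) hwn.1 hwn.2.1 hwn.2.2
          (hsub hb) (hsub hp) (hsub' hb') (hsub' hp') e
    rw [Finset.card_powersetCard, hPc, Nat.choose_two_right] at hle
    have h5 : K.card * 3 ≤ K.card * (K.card - 1) := Nat.mul_le_mul_left _ (by omega)
    omega
  · have h2 : K.card = 2 := by omega
    obtain ⟨i1, i2, h12, hKe⟩ := Finset.card_eq_two.1 h2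
    have m1 : i1 ∈ K := by rw [hKe]; simp
    have m2 : i2 ∈ K := by rw [hKe]; simp
    have hb : om i1 ≠ om i2 := fun e => h12 (hinj i1 m1 i2 m2 e)
    obtain ⟨k, k1, k2⟩ := h.hc _ _ hb
    obtain ⟨kD, ks, ka⟩ := h.IIi' ha (hInn i1 m1) (hInn i2 m2) hb k1 k2
    obtain ⟨i, hi, hzi⟩ := hUK (om k) ((memU _).2 ⟨ka, ks⟩)
    have hi' := (memK i).1 hi
    refine h.IIab ks (hE i hi'.1) hi'.1 hzi (h.hv i) (j := k) (by rintro rfl; exact hi'.1 kD)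
      (h.hv k) ?_
    rw [hKe] at hi
    simp only [Finset.mem_insert, Finset.mem_singleton] at hi
    rcases hi with rfl | rfl <;> assumption

/-- in a maximal state all indices are in `D` -/
theorem allD (h : St T om S) (hS : ∃ b, S b) : ∀ i, Dx T om S i := by
  by_contra hn
  push Not at hn
  obtain ⟨t, ht⟩ := hn
  by_cases hF : ∀ i, ¬ Dx T om S i → ¬ S (om i)
  · exact h.caseI hF ht hS
  · push Not at hF
    obtain ⟨i, hi, hs⟩ := hF
    exact h.caseII hi hs

end St
end caseIIend
section existence
variable {V ι : Type} [Fintype V] [DecidableEq V] [Fintype ι] [DecidableEq ι]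
variable {T : ι → Finset V} {om om' : ι → V}

lemma con_un (hT : ∀ i, (T i).card = 3) (hv : ∀ i, om i ∈ T i) {x0 : V} {i : ι} {p q : V}
    (hp : p ∈ T i) (hq : q ∈ T i) (hpo : p ≠ om i) (hqo : q ≠ om i) (h : Con T om x0 p) :
    Con T om x0 q := h.trans (Con.kept hT hv hp hq hpo hqo)

open Classical in
lemma con_sc (hT : ∀ i, (T i).card = 3) (hv : ∀ i, om i ∈ T i) {x0 : V} (χ : V → ZMod 2)
    (hχ : ∀ i, Dx T om (Con T om x0) i → cr T om χ i = 0) (x y : V) (hx : Con T om x0 x)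
    (hy : Con T om x0 y) : χ x = χ y := by
  have hg : ∀ i, cr T om (fun v => if Con T om x0 v then χ v else 0) i = 0 := by
    intro i
    obtain ⟨p, q, hp, hq, hpq, hpo, hqo⟩ := exkept hT hv i
    rw [cr_eq hT hv _ hp hq hpq hpo hqo]
    by_cases h : Con T om x0 p
    · have h' := con_un hT hv hp hq hpo hqo h
      rw [if_pos h, if_pos h', ← cr_eq hT hv χ hp hq hpq hpo hqo]
      exact hχ i (fun v hv' hvo => con_un hT hv hp hv' hpo hvo h)
    · have h' : ¬ Con T om x0 q := fun h2 => h (con_un hT hv hq hp hqo hpo h2)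
      rw [if_neg h, if_neg h', add_zero]
  have h1 := hx _ hg
  have h2 := hy _ hg
  rw [if_pos (Con.refl _)] at h1 h2
  rw [if_pos hx] at h1
  rw [if_pos hy] at h2
  rw [← h1, ← h2]

open Classical in
theorem max_state (hT : ∀ i, (T i).card = 3) (hc : ∀ x y, x ≠ y → ∃ i, x ∈ T i ∧ y ∈ T i)
    [Nonempty V] (hex : ∃ om : ι → V, (∀ i, om i ∈ T i) ∧ Ev T om) :
    ∃ om : ι → V, (∀ i, om i ∈ T i) ∧ Ev T om ∧
      ∃ x0, ∀ i, ∀ v ∈ T i, v ≠ om i → Con T om x0 v := by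
  obtain ⟨om0, h0⟩ := hex
  obtain ⟨x00⟩ := ‹Nonempty V›
  let X := {o : (ι → V) × V // (∀ i, o.1 i ∈ T i) ∧ Ev T o.1}
  have : Nonempty X := ⟨⟨(om0, x00), h0⟩⟩
  obtain ⟨⟨⟨om, x0⟩, hv, he⟩, hmax⟩ := Finite.exists_max (fun o : X =>
    (Finset.univ.filter (fun i => ∀ v ∈ T i, v ≠ o.1.1 i → Con T o.1.1 o.1.2 v)).card)
  refine ⟨om, hv, he, x0, ?_⟩
  have st : St T om (Con T om x0) := by
    refine ⟨hT, hc, hv, he, fun i p q hp hq hpo hqo h => con_un hT hv hp hq hpo hqo h,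
      fun χ hχ x y hx hy => con_sc hT hv χ hχ x y hx hy, ?_⟩
    intro om' hv' he' x0' hD k hk hk'
    have := hmax ⟨(om', x0'), hv', he'⟩
    refine absurd this (not_le.2 ?_)
    apply Finset.card_lt_card
    rw [Finset.ssubset_iff_of_subset]
    · refine ⟨k, ?_, ?_⟩
      · simp only [Finset.mem_filter, Finset.mem_univ, true_and]; exact hk'
      · simp only [Finset.mem_filter, Finset.mem_univ, true_and]; exact hk
    · intro i hi
      simp only [Finset.mem_filter, Finset.mem_univ, true_and] at hi ⊢
      exact hD i hi
  exact st.allD ⟨x0, Con.refl _⟩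

/-- maximal choice for connectivity -/
structure Mx (T : ι → Finset V) (om : ι → V) (r w : V) : Prop where
  hT : ∀ i, (T i).card = 3
  hc : ∀ x y, x ≠ y → ∃ i, x ∈ T i ∧ y ∈ T i
  hv : ∀ i, om i ∈ T i
  mx : ∀ om' : ι → V, (∀ i, om' i ∈ T i) → ∀ v, ¬ Con T om r v →
    (∀ x, Con T om r x → Con T om' r x) → Con T om' r v → False
  hw : ¬ Con T om r w

namespace Mx
variable {r w : V}

lemma edge (h : Mx T om r w) {x v : V} (hx : Con T om r x) (hv : ¬ Con T om r v) {i : ι}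
    (hxi : x ∈ T i) (hvi : v ∈ T i) : om i = v ∧ x ≠ om i := by
  have hxv : x ≠ v := fun e => hv (e ▸ hx)
  suffices ho : om i = v from ⟨ho, by rw [ho]; exact hxv⟩
  by_contra ho
  have hvo : v ≠ om i := fun e => ho e.symm
  have hxo : x = om i := by
    by_contra hxo
    exact hv (con_un h.hT h.hv hxi hvi hxo hvo hx)
  obtain ⟨u, hu, hvu, huo⟩ := exkept1 h.hT h.hv hvi hvo
  have nD : ¬ Dx T om (Con T om r) i := fun hD => hv (hD v hvi hvo)
  have hval : ∀ j, Function.update om i u j ∈ T j := by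
    intro j
    by_cases hj : j = i
    · subst hj; simpa using hu
    · simpa [hj] using h.hv j
  have hsub : ∀ y, Con T om r y → Con T (Function.update om i u) r y := by
    intro y hy χ hχ
    refine con_sc h.hT h.hv χ (fun l hl => ?_) r y (Con.refl _) hy
    have hli : l ≠ i := by rintro rfl; exact nD hl
    rw [← cr_congr (om' := Function.update om i u) (by simp [hli])]
    exact hχ l
  refine h.mx _ hval v hv hsub ((hsub x hx).trans (Con.kept h.hT hval hxi hvi ?_ ?_))
  · rw [Function.update_self, hxo]; exact huo.symm
  · rw [Function.update_self]; exact hvu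

lemma bridge (h : Mx T om r w) {e : ι} (ho : om e = w) {x : V} (hx : Con T om r x)
    (hxe : x ∈ T e) : ∃ χ : V → ZMod 2, cr T om χ e = 1 ∧ ∀ l, l ≠ e → cr T om χ l = 0 := by
  have hwe : w ∈ T e := ho ▸ h.hv e
  have hxo := (h.edge hx h.hw hxe hwe).2
  obtain ⟨x', hx', hxx, hxo'⟩ := exkept1 h.hT h.hv hxe hxo
  have hval : ∀ j, Function.update om e x' j ∈ T j := by
    intro j
    by_cases hj : j = e
    · subst hj; simpa using hx'
    · simpa [hj] using h.hv j
  by_cases hall : ∀ χ : V → ZMod 2, (∀ l, cr T (Function.update om e x') χ l = 0) →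
      ∀ y, Con T om r y → χ r = χ y
  · exfalso
    have hsub : ∀ y, Con T om r y → Con T (Function.update om e x') r y :=
      fun y hy χ hχ => hall χ hχ y hy
    refine h.mx _ hval w h.hw hsub ((hsub x hx).trans (Con.kept h.hT hval hxe hwe ?_ ?_))
    · rw [Function.update_self]; exact hxx
    · rw [Function.update_self, ← ho]; exact hxo'.symm
  · push Not at hall
    obtain ⟨χ, hχ, y, hy, hne⟩ := hall
    have h0 : ∀ l, l ≠ e → cr T om χ l = 0 := by
      intro l hl
      rw [← cr_congr (om' := Function.update om e x') (by simp [hl])]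
      exact hχ l
    refine ⟨χ, z2ne fun hz => hne ?_, h0⟩
    refine hy χ fun l => ?_
    by_cases hl : l = e
    · rw [hl, hz]
    · exact h0 l hl

open Classical in
lemma leaf (h : Mx T om r w) : ∀ n, ∀ (e : ι) (χ : V → ZMod 2) (x : V), om e = w →
    Con T om r x → x ∈ T e → χ x = 1 → cr T om χ e = 1 → (∀ l, l ≠ e → cr T om χ l = 0) →
    (Finset.univ.filter (fun y => Con T om r y ∧ χ y = 1)).card = n →
    ∃ z e', Con T om r z ∧ χ z = 1 ∧ z ∈ T e' ∧ om e' = w ∧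
      ∀ l, z ∈ T l → z ≠ om l → l = e' := by
  intro n
  induction n using Nat.strong_induction_on with
  | _ n ih =>
  intro e χ x ho hx hxe hx1 ce c0 hn
  have hwe : w ∈ T e := ho ▸ h.hv e
  have hxo := (h.edge hx h.hw hxe hwe).2
  by_cases hA : ∀ y, Con T om r y → χ y = 1 → y = x
  · refine ⟨x, e, hx, hx1, hxe, ho, ?_⟩
    intro l hl hlo
    by_contra hle
    obtain ⟨y, hy, hxy, hyo⟩ := exkept1 h.hT h.hv hl hlo
    have := good_eq h.hT h.hv (c0 l hle) hy hl hyo hlo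
    exact hxy (hA y (con_un h.hT h.hv hl hy hlo hyo hx) (this.trans hx1)).symm
  · push Not at hA
    obtain ⟨y, hy, hy1, hyx⟩ := hA
    obtain ⟨e2, hye, hwe2⟩ := h.hc y w (fun e => h.hw (e ▸ hy))
    obtain ⟨ho2, hyo⟩ := h.edge hy h.hw hye hwe2
    have hee : e2 ≠ e := by
      rintro rfl
      have := bad_eq h.hT h.hv ce hye hxe hyx hyo hxo
      rw [hy1, hx1] at this
      revert this; decide
    obtain ⟨χ', ce2', c02'⟩ := h.bridge ho2 hy hye
    obtain ⟨χ2, hχ2, hx2, -⟩ := norm_pot h.hT h.hv χ' x 0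
    have ce2 : cr T om χ2 e2 = 1 := by rw [hχ2, ce2']
    have c02 : ∀ l, l ≠ e2 → cr T om χ2 l = 0 := fun l hl => by rw [hχ2, c02' l hl]
    obtain ⟨y2, hy2, hyy, hyo2⟩ := exkept1 h.hT h.hv hye hyo
    have hRy2 := con_un h.hT h.hv hye hy2 hyo hyo2 hy
    have sub : ∀ v, Con T om r v → χ2 v = 1 → χ v = 1 := by
      intro v hv hv1
      have key : χ2 v * (1 + χ v) = χ2 x * (1 + χ x) := by
        refine con_sc h.hT h.hv (fun v => χ2 v * (1 + χ v)) (fun l hl => ?_) v x hv hx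
        obtain ⟨p, q, hp, hq, hpq, hpo, hqo⟩ := exkept h.hT h.hv l
        rw [cr_eq h.hT h.hv _ hp hq hpq hpo hqo]
        by_cases l1 : l = e
        · subst l1
          have hg := c02 l hee.symm
          rw [good_eq h.hT h.hv hg hp hxe hpo hxo, good_eq h.hT h.hv hg hq hxe hqo hxo, hx2]
          simp
        · have hg := c0 l l1
          by_cases l2 : l = e2
          · subst l2
            rw [good_eq h.hT h.hv hg hp hye hpo hyo, good_eq h.hT h.hv hg hq hye hqo hyo, hy1,
              z2add]
            simp
          · rw [good_eq h.hT h.hv hg hp hq hpo hqo,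
              good_eq h.hT h.hv (c02 l l2) hp hq hpo hqo]
            exact z2add _
      rw [hx2, hv1, zero_mul, one_mul] at key
      have := z2add (1 : ZMod 2)
      linear_combination key - this
    have hlt : (Finset.univ.filter (fun y => Con T om r y ∧ χ2 y = 1)).card < n := by
      rw [← hn]
      apply Finset.card_lt_card
      rw [Finset.ssubset_iff_of_subset]
      · exact ⟨x, by simp [hx, hx1], by simp [hx2]⟩
      · intro v hv
        simp only [Finset.mem_filter, Finset.mem_univ, true_and] at hv ⊢
        exact ⟨hv.1, sub v hv.1 hv.2⟩
    obtain ⟨s, hs, hse, hs1⟩ : ∃ s, Con T om r s ∧ s ∈ T e2 ∧ χ2 s = 1 := by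
      rcases z2 (χ2 y) with h0 | h1
      · refine ⟨y2, hRy2, hy2, ?_⟩
        have := bad_eq h.hT h.hv ce2 hy2 hye hyy.symm hyo2 hyo
        rw [this, h0, zero_add]
      · exact ⟨y, hy, hye, h1⟩
    obtain ⟨z, e', hz, hz1, hze, hoe, hl⟩ := ih _ hlt e2 χ2 s ho2 hs hse hs1 ce2 c02 rfl
    exact ⟨z, e', hz, sub z hz hz1, hze, hoe, hl⟩

open Classical in
lemma absurd' (h : Mx T om r w) (h2 : ∀ i : ι, ∃ j, j ≠ i) : False := by
  obtain ⟨e, hre, hwe⟩ := h.hc r w (fun e => h.hw (e ▸ Con.refl _))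
  obtain ⟨ho, hro⟩ := h.edge (Con.refl _) h.hw hre hwe
  obtain ⟨χ0, c1', c0'⟩ := h.bridge ho (Con.refl _) hre
  obtain ⟨χ, hχ, hχr, -⟩ := norm_pot h.hT h.hv χ0 r 1
  have c1 : cr T om χ e = 1 := by rw [hχ, c1']
  have c0 : ∀ l, l ≠ e → cr T om χ l = 0 := fun l hl => by rw [hχ, c0' l hl]
  obtain ⟨ψ, hψ, hψr, hψx⟩ := norm_pot h.hT h.hv χ r 0
  obtain ⟨q, hq, hrq, hqo⟩ := exkept1 h.hT h.hv hre hro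
  have hRq := con_un h.hT h.hv hre hq hro hqo (Con.refl r)
  have hψq : ψ q = 1 := by
    have := bad_eq h.hT h.hv (show cr T om ψ e = 1 by rw [hψ, c1]) hq hre hrq.symm hqo hro
    rw [this, hψr, zero_add]
  obtain ⟨z1, e1, hz1, hv1, hze1, hoe1, hl1⟩ := h.leaf _ e χ r ho (Con.refl _) hre hχr c1 c0 rfl
  obtain ⟨z2, e2, hz2, hv2, hze2, hoe2, hl2⟩ := h.leaf _ e ψ q ho hRq hq hψq
    (by rw [hψ, c1]) (fun l hl => by rw [hψ, c0 l hl]) rfl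
  have hne : z1 ≠ z2 := by
    rintro rfl
    rw [hψx, hv1, hχr] at hv2
    revert hv2; decide
  have z1w : z1 ≠ w := fun e => h.hw (e ▸ hz1)
  have z2w : z2 ≠ w := fun e => h.hw (e ▸ hz2)
  obtain ⟨j, hj1, hj2⟩ := h.hc z1 z2 hne
  have hoj : om j = w := by
    by_cases hk : z1 = om j
    · rw [hl2 j hj2 (by rw [← hk]; exact hne.symm), hoe2]
    · rw [hl1 j hj1 hk, hoe1]
  have E1 := hl1 j hj1 (by rw [hoj]; exact z1w)
  have E2 := hl2 j hj2 (by rw [hoj]; exact z2w)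
  have L1 : ∀ l, z1 ∈ T l → z1 ≠ om l → l = j := fun l a b => (hl1 l a b).trans E1.symm
  have L2 : ∀ l, z2 ∈ T l → z2 ≠ om l → l = j := fun l a b => (hl2 l a b).trans E2.symm
  have hR : ∀ y, Con T om r y → y = z1 ∨ y = z2 := by
    intro y hy
    have hg : ∀ l, cr T om (fun v => if v = z1 ∨ v = z2 then 1 else 0) l = 0 := by
      intro l
      by_cases hlj : l = j
      · rw [hlj, cr_eq h.hT h.hv _ hj1 hj2 hne (by rw [hoj]; exact z1w) (by rw [hoj]; exact z2w)]
        simp only [true_or, or_true, if_true]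
        exact z2add _
      · obtain ⟨p, q, hp, hq, hpq, hpo, hqo⟩ := exkept h.hT h.hv l
        have hn : ∀ x ∈ T l, x ≠ om l → ¬ (x = z1 ∨ x = z2) := by
          rintro x hx hxo (rfl | rfl)
          · exact hlj (L1 l hx hxo)
          · exact hlj (L2 l hx hxo)
        rw [cr_eq h.hT h.hv _ hp hq hpq hpo hqo, if_neg (hn p hp hpo), if_neg (hn q hq hqo),
          add_zero]
    have := (hz1.symm.trans hy) _ hg
    by_contra hcon
    rw [if_pos (Or.inl rfl), if_neg hcon] at this
    revert this; decide
  have hV : ∀ v, v = z1 ∨ v = z2 ∨ v = w := by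
    intro v
    by_cases hv : Con T om r v
    · rcases hR v hv with e | e
      · exact Or.inl e
      · exact Or.inr (Or.inl e)
    · obtain ⟨l, hl, hvl⟩ := h.hc z1 v (fun e => hv (e ▸ hz1))
      obtain ⟨h3, h4⟩ := h.edge hz1 hv hl hvl
      rw [L1 l hl h4, hoj] at h3
      exact Or.inr (Or.inr h3.symm)
  obtain ⟨j', hj'⟩ := h2 j
  obtain ⟨p, q, hp, hq, hpq, hpo, hqo⟩ := exkept h.hT h.hv j'
  have hnz : ∀ x ∈ T j', x ≠ om j' → x = w := by
    intro x hx hxo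
    rcases hV x with rfl | rfl | e
    · exact absurd (L1 j' hx hxo) hj'
    · exact absurd (L2 j' hx hxo) hj'
    · exact e
  exact hpq ((hnz p hp hpo).trans (hnz q hq hqo).symm)

end Mx

open Classical in
theorem exists_conn (hT : ∀ i, (T i).card = 3) (hc : ∀ x y, x ≠ y → ∃ i, x ∈ T i ∧ y ∈ T i)
    [Nonempty V] (h2 : ∀ i : ι, ∃ j, j ≠ i) :
    ∃ om : ι → V, (∀ i, om i ∈ T i) ∧ ∀ x y, Con T om x y := by
  have hne : ∀ i, ∃ v, v ∈ T i := fun i => Finset.card_pos.1 (by rw [hT i]; norm_num)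
  choose om0 h0 using hne
  obtain ⟨x00⟩ := ‹Nonempty V›
  let X := {o : (ι → V) × V // (∀ i, o.1 i ∈ T i)}
  have : Nonempty X := ⟨⟨(om0, x00), h0⟩⟩
  obtain ⟨⟨⟨om, r⟩, hv⟩, hmax⟩ := Finite.exists_max (fun o : X =>
    (Finset.univ.filter (fun v => Con T o.1.1 o.1.2 v)).card)
  refine ⟨om, hv, ?_⟩
  suffices hs : ∀ w, Con T om r w from fun x y => (hs x).symm.trans (hs y)
  by_contra hcon
  push Not at hcon
  obtain ⟨w, hw⟩ := hcon
  refine Mx.absurd' (T := T) (om := om) (r := r) (w := w) ⟨hT, hc, hv, ?_, hw⟩ h2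
  intro om' hv' v hnv hsub hv1
  have := hmax ⟨(om', r), hv'⟩
  refine absurd this (not_le.2 ?_)
  apply Finset.card_lt_card
  rw [Finset.ssubset_iff_of_subset]
  · refine ⟨v, ?_, ?_⟩
    · simp only [Finset.mem_filter, Finset.mem_univ, true_and]; exact hv1
    · simp only [Finset.mem_filter, Finset.mem_univ, true_and]; exact hnv
  · intro i hi
    simp only [Finset.mem_filter, Finset.mem_univ, true_and] at hi ⊢
    exact hsub i hi

open Classical in
theorem exists_ev (hT : ∀ i, (T i).card = 3) (hc : ∀ x y, x ≠ y → ∃ i, x ∈ T i ∧ y ∈ T i)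
    [Nonempty V] (h2 : ∀ i : ι, ∃ j, j ≠ i) :
    ∃ om : ι → V, (∀ i, om i ∈ T i) ∧ Ev T om := by
  obtain ⟨om, hv, hcon⟩ := exists_conn hT hc h2
  have hk := exkept hT hv
  choose p q hp hq hpq hpo hqo using hk
  let M : (V → ZMod 2) →ₗ[ZMod 2] (ι → ZMod 2) :=
    { toFun := fun χ i => χ (p i) + χ (q i)
      map_add' := by intro a b; funext i; simp only [Pi.add_apply]; ring
      map_smul' := by intro c a; funext i; simp [mul_add] }
  let φ : Module.Dual (ZMod 2) (V → ZMod 2) :=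
    { toFun := fun χ => ∑ i, (∑ v ∈ T i, χ v + χ (p i))
      map_add' := by
        intro a b
        rw [← Finset.sum_add_distrib]
        refine Finset.sum_congr rfl fun i _ => ?_
        simp only [Pi.add_apply, Finset.sum_add_distrib]; ring
      map_smul' := by
        intro c a
        simp only [Pi.smul_apply, smul_eq_mul, RingHom.id_apply, Finset.mul_sum, mul_add] }
  have hφ : φ ∈ (LinearMap.ker M).dualAnnihilator := by
    rw [Submodule.mem_dualAnnihilator]
    intro χ hχ
    rw [LinearMap.mem_ker] at hχ
    have hg : ∀ i, cr T om χ i = 0 := by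
      intro i
      rw [cr_eq hT hv χ (hp i) (hq i) (hpq i) (hpo i) (hqo i)]
      exact congrFun hχ i
    show ∑ i, (∑ v ∈ T i, χ v + χ (p i)) = 0
    refine Finset.sum_eq_zero fun i _ => ?_
    rw [Finset.sum_congr rfl (fun v _ => hcon v (p i) χ hg), Finset.sum_const, hT i]
    generalize χ (p i) = c
    revert c; decide
  rw [← LinearMap.range_dualMap_eq_dualAnnihilator_ker] at hφ
  obtain ⟨ψ, hψ⟩ := hφ
  let c : ι → ZMod 2 := fun i => ψ (Pi.single i 1)
  refine ⟨fun i => if c i = 1 then q i else p i, fun i => ?_, ?_⟩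
  · dsimp only; split_ifs
    · exact hq i
    · exact hp i
  · rw [ev_iff]
    intro χ
    have h1 : ψ (M χ) = φ χ := by rw [← hψ]; rfl
    have h3 : ψ (M χ) = ∑ i, (χ (p i) + χ (q i)) * c i := by
      rw [LinearMap.pi_apply_eq_sum_univ ψ (M χ)]
      refine Finset.sum_congr rfl fun i _ => ?_
      rw [smul_eq_mul]
      congr 2
      funext j
      simp [Pi.single_apply, eq_comm]
    have h4 : φ χ = ∑ i, ∑ v ∈ T i, χ v + ∑ i, χ (p i) := Finset.sum_add_distrib
    have h5 : ∑ i, χ (if c i = 1 then q i else p i) =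
        ∑ i, (χ (p i) + χ (q i)) * c i + ∑ i, χ (p i) := by
      rw [← Finset.sum_add_distrib]
      refine Finset.sum_congr rfl fun i _ => ?_
      rcases z2 (c i) with h | h
      · rw [h, if_neg (by decide)]; ring
      · rw [h, if_pos rfl]; linear_combination - z2add (χ (p i))
    rw [h5, ← h3, h1, h4]
    linear_combination z2add (∑ i, χ (p i))

end existence
section hier
variable {V ι : Type} [Fintype V] [DecidableEq V] [Fintype ι] [DecidableEq ι]
variable {T : ι → Finset V} {om om' : ι → V}

def Stp (T : ι → Finset V) (om : ι → V) (u : V) (i : ι) (y : V) : Prop :=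
  u ∈ T i ∧ y ∈ T i ∧ u ≠ y ∧ u ≠ om i ∧ y ≠ om i

def Wk (T : ι → Finset V) (om : ι → V) : V → List (ι × V) → V → Prop
  | u, [], v => u = v
  | u, s :: L, v => Stp T om u s.1 s.2 ∧ Wk T om s.2 L v

lemma wk_append {L L' : List (ι × V)} {u m v : V} (h : Wk T om u L m) (h' : Wk T om m L' v) :
    Wk T om u (L ++ L') v := by
  induction L generalizing u with
  | nil => cases h; exact h'
  | cons s L ih => exact ⟨h.1, ih h.2⟩

lemma wk_split {L L' : List (ι × V)} {u v : V} (h : Wk T om u (L ++ L') v) :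
    ∃ m, Wk T om u L m ∧ Wk T om m L' v := by
  induction L generalizing u with
  | nil => exact ⟨u, rfl, h⟩
  | cons s L ih =>
    obtain ⟨m, h1, h2⟩ := ih h.2
    exact ⟨m, ⟨h.1, h1⟩, h2⟩

lemma wk_sum (hT : ∀ i, (T i).card = 3) (hv : ∀ i, om i ∈ T i) (χ : V → ZMod 2)
    {L : List (ι × V)} {u v : V} (h : Wk T om u L v) :
    ((L.map Prod.fst).map (cr T om χ)).sum = χ u + χ v := by
  induction L generalizing u with
  | nil => cases h; exact (z2add _).symm
  | cons s L ih =>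
    obtain ⟨⟨h1, h2, h3, h4, h5⟩, h6⟩ := h
    simp only [List.map_cons, List.sum_cons]
    rw [ih h6, cr_eq hT hv χ h1 h2 h3 h4 h5]
    linear_combination z2add (χ s.2)

lemma wk_fun {L : List (ι × V)} {u v : V} (h : Wk T om u L v) :
    ∃ f : Fin (L.length + 1) → V, f 0 = u ∧ f (Fin.last _) = v ∧
      ∀ i : Fin L.length, f i.castSucc ≠ f i.succ ∧ f i.castSucc ∈ T (L.get i).1 ∧
        f i.succ ∈ T (L.get i).1 := by
  induction L generalizing u with
  | nil => cases h; exact ⟨fun _ => v, rfl, rfl, fun i => i.elim0⟩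
  | cons s L ih =>
    obtain ⟨⟨h1, h2, h3, h4, h5⟩, h6⟩ := h
    obtain ⟨f, f0, fl, hf⟩ := ih h6
    refine ⟨Fin.cons u f, rfl, ?_, ?_⟩
    · exact fl
    · intro i
      refine Fin.cases ?_ (fun j => ?_) i
      · refine ⟨?_, h1, ?_⟩
        · show u ≠ f 0
          rw [f0]; exact h3
        · show f 0 ∈ T s.1
          rw [f0]; exact h2
      · exact hf j

open Classical in
theorem hierholzer (hT : ∀ i, (T i).card = 3) (hv : ∀ i, om i ∈ T i) (he : Ev T om) [Nonempty ι]
    {x0 : V} (hcon : ∀ i, ∀ v ∈ T i, v ≠ om i → Con T om x0 v) :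
    ∃ u L, Wk T om u L u ∧ (L.map Prod.fst).Nodup ∧ ∀ i, i ∈ L.map Prod.fst := by
  let P : ℕ → Prop := fun n => ∃ u L v, Wk T om u L v ∧ (L.map Prod.fst).Nodup ∧ L.length = n
  have hb : ∀ n, P n → n ≤ Fintype.card ι := by
    rintro n ⟨u, L, v, -, hn, rfl⟩
    simpa using hn.length_le_card
  have hP1 : P 1 := by
    obtain ⟨i⟩ := ‹Nonempty ι›
    obtain ⟨p, q, hp, hq, hpq, hpo, hqo⟩ := exkept hT hv i
    exact ⟨p, [(i, q)], q, ⟨⟨hp, hq, hpq, hpo, hqo⟩, rfl⟩, by simp, rfl⟩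
  have h1 : 1 ≤ Nat.findGreatest P (Fintype.card ι) := Nat.le_findGreatest (hb 1 hP1) hP1
  obtain ⟨u, L, v, hW, hnd, hlen⟩ := Nat.findGreatest_spec (hb 1 hP1) hP1
  have hmax : ∀ u L' v, Wk T om u L' v → (L'.map Prod.fst).Nodup → L'.length ≤ L.length := by
    intro u' L' v' h1 h2
    rw [hlen]
    have hp : P L'.length := ⟨u', L', v', h1, h2, rfl⟩
    exact Nat.le_findGreatest (hb _ hp) hp
  rw [← hlen] at h1
  -- no extension
  have noext : ∀ u' L' v', Wk T om u' L' v' → (L'.map Prod.fst).Nodup → L'.length = L.length →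
      ∀ i, i ∉ L'.map Prod.fst → v' ∈ T i → v' ≠ om i → False := by
    intro u' L' v' h1 h2 h3 i hi hvi hvo
    obtain ⟨y, hy, hvy, hyo⟩ := exkept1 hT hv hvi hvo
    have := hmax u' (L' ++ [(i, y)]) y (wk_append h1 ⟨⟨hvi, hy, hvy, hvo, hyo⟩, rfl⟩) (by
      rw [List.map_append, List.nodup_append]
      refine ⟨h2, by simp, ?_⟩
      intro a ha b hb e
      simp only [List.map_cons, List.map_nil, List.mem_singleton] at hb
      subst e; subst hb
      exact hi ha)
    simp at this
    omega
  have huv : u = v := by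
    by_contra hne
    have hs := wk_sum hT hv (fun x => if x = v then 1 else 0) hW
    rw [if_neg hne, if_pos rfl, zero_add, ← List.sum_toFinset _ hnd] at hs
    have ht := he (fun x => if x = v then 1 else 0)
    rw [← Finset.sum_add_sum_compl (L.map Prod.fst).toFinset, hs] at ht
    obtain ⟨i, hi, hi0⟩ : ∃ i ∈ ((L.map Prod.fst).toFinset)ᶜ,
        cr T om (fun x => if x = v then 1 else 0) i ≠ 0 := by
      by_contra hcon
      push Not at hcon
      rw [Finset.sum_eq_zero hcon] at ht
      revert ht; decide
    rw [Finset.mem_compl, List.mem_toFinset] at hi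
    obtain ⟨p, q, hp, hq, hpq, hpo, hqo⟩ := exkept hT hv i
    rw [cr_eq hT hv _ hp hq hpq hpo hqo] at hi0
    by_cases hpv : p = v
    · exact noext u L v hW hnd rfl i hi (hpv ▸ hp) (hpv ▸ hpo)
    by_cases hqv : q = v
    · exact noext u L v hW hnd rfl i hi (hqv ▸ hq) (hqv ▸ hqo)
    rw [if_neg hpv, if_neg hqv] at hi0
    exact hi0 (add_zero _)
  subst huv
  refine ⟨u, L, hW, hnd, ?_⟩
  by_contra hall
  push Not at hall
  obtain ⟨i, hi⟩ := hall
  let X : V → Prop := fun x => ∃ L1 L2, L = L1 ++ L2 ∧ Wk T om u L1 x ∧ Wk T om x L2 u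
  have noX : ∀ l, l ∉ L.map Prod.fst → ∀ x ∈ T l, x ≠ om l → ¬ X x := by
    rintro l hl x hx hxo ⟨L1, L2, rfl, w1, w2⟩
    have hperm : (L2 ++ L1).Perm (L1 ++ L2) := List.perm_append_comm
    refine noext x (L2 ++ L1) x (wk_append w2 w1) ?_ hperm.length_eq l ?_ hx hxo
    · exact (hperm.map Prod.fst).nodup_iff.2 hnd
    · rw [(hperm.map Prod.fst).mem_iff]; exact hl
  have hg : ∀ l, cr T om (fun x => if X x then 1 else 0) l = 0 := by
    intro l
    by_cases hl : l ∈ L.map Prod.fst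
    · obtain ⟨⟨l', y⟩, hs, rfl⟩ := List.mem_map.1 hl
      obtain ⟨L1, L2, rfl⟩ := List.append_of_mem hs
      obtain ⟨m, w1, w2⟩ := wk_split hW
      have hm : X m := ⟨L1, (l', y) :: L2, rfl, w1, w2⟩
      obtain ⟨st, w3⟩ := w2
      have hy : X y := ⟨L1 ++ [(l', y)], L2, by simp, wk_append w1 ⟨st, rfl⟩, w3⟩
      obtain ⟨a1, a2, a3, a4, a5⟩ := st
      rw [cr_eq hT hv _ a1 a2 a3 a4 a5]
      dsimp only
      rw [if_pos hm, if_pos hy]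
      exact z2add _
    · obtain ⟨p, q, hp, hq, hpq, hpo, hqo⟩ := exkept hT hv l
      rw [cr_eq hT hv _ hp hq hpq hpo hqo, if_neg (noX l hl p hp hpo), if_neg (noX l hl q hq hqo),
        add_zero]
  obtain ⟨p, q, hp, hq, hpq, hpo, hqo⟩ := exkept hT hv i
  have e1 := hcon i p hp hpo _ hg
  have hXu : X u := ⟨[], L, rfl, rfl, hW⟩
  have e2 : (if X x0 then 1 else 0 : ZMod 2) = if X u then 1 else 0 := by
    cases L with
    | nil => simp at h1
    | cons s L =>
      obtain ⟨⟨a1, a2, a3, a4, a5⟩, -⟩ := id hW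
      exact hcon s.1 u a1 a4 _ hg
  rw [e2, if_pos hXu, if_neg (noX i hi p hp hpo)] at e1
  revert e1; decide

end hier

end Cov3


theorem covering3Hypergraph_eulerian {V : Type} [Fintype V] [DecidableEq V]
    (E : Multiset (Finset V)) (hH : IsCoveringHypergraph E 2 3)
    (h2 : 2 ≤ Multiset.card E) :
    IsEulerian E := by
  obtain ⟨-, hu, hcov⟩ := hH
  let T : Fin E.toList.length → Finset V := fun i => E.toList.get i
  have hlen : 2 ≤ E.toList.length := by simpa using h2
  have hTE : (Finset.univ : Finset (Fin E.toList.length)).val.map T = E := by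
    rw [Fin.univ_val_map, List.ofFn_get, Multiset.coe_toList]
  have hmem : ∀ f, f ∈ E ↔ ∃ i, T i = f := by
    intro f
    rw [← Multiset.mem_toList, List.mem_iff_get]
  have hT : ∀ i, (T i).card = 3 := fun i => hu _ ((hmem _).2 ⟨i, rfl⟩)
  have hc : ∀ x y, x ≠ y → ∃ i, x ∈ T i ∧ y ∈ T i := by
    intro x y hxy
    obtain ⟨f, hf, hs⟩ := hcov {x, y} (Finset.card_pair hxy)
    obtain ⟨i, rfl⟩ := (hmem f).1 hf
    exact ⟨i, hs (by simp), hs (by simp)⟩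
  have hne : Nonempty (Fin E.toList.length) := ⟨⟨0, by omega⟩⟩
  have hVne : Nonempty V := by
    obtain ⟨v, -⟩ := Finset.card_pos.1 (show 0 < (T ⟨0, by omega⟩).card by rw [hT]; norm_num)
    exact ⟨v⟩
  have hother : ∀ i : Fin E.toList.length, ∃ j, j ≠ i := by
    intro i
    by_cases hi : i.1 = 0
    · exact ⟨⟨1, by omega⟩, fun e => by rw [← e] at hi; simp at hi⟩
    · exact ⟨⟨0, by omega⟩, fun e => hi (by rw [← e])⟩
  obtain ⟨om, hv, he, x0, hx0⟩ := Cov3.max_state hT hc (Cov3.exists_ev hT hc hother)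
  obtain ⟨u, L, hW, hnd, hall⟩ := Cov3.hierholzer hT hv he hx0
  obtain ⟨f, f0, fl, hf⟩ := Cov3.wk_fun hW
  refine ⟨L.length, f, fun i => T (L.get i).1, ⟨f0.trans fl.symm, hf⟩, ?_⟩
  have hofn : List.ofFn (fun i => T (L.get i).1) = (L.map Prod.fst).map T := by
    have : (fun i => T (L.get i).1) = (fun s : Fin E.toList.length × V => T s.1) ∘ L.get := rfl
    rw [this, ← List.map_ofFn, List.ofFn_get, List.map_map]
    rfl
  unfold walkEdges
  rw [hofn, ← Multiset.map_coe]
  conv_rhs => rw [← hTE]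
  congr 1
  have hnd' : ((L.map Prod.fst : List _) : Multiset (Fin E.toList.length)).Nodup :=
    Multiset.coe_nodup.2 hnd
  refine (Multiset.Nodup.ext hnd' Finset.univ.nodup).2 fun i => ?_
  simp only [Multiset.mem_coe, Finset.mem_val, Finset.mem_univ, iff_true]
  exact hall i
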